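/- arXiv:1902.03270 — 14 statements merged into one kernel-verified Lean document; each statement's English description precedes it below -/
import Mathlib

section
/- Let X be a locally connected topological space and f : X → ℝ a continuous function. Then for every x ∈ X and every real μ > f(x), the connected component of x in the open sublevel set {f < μ} is equal to the union, over all λ ∈ (f(x), μ), of the connected components of x in {f < λ}. (Lemma 2.2, equation (2.5), of the paper.) -/
/-- Lemma 2.2, equation (2.5): in a locally connected space, the connected component of `x`
in the open sublevel set `{f < μ}` is the union over `λ ∈ (f x, μ)` of the connected
components of `x` in `{f < λ}`. -/
theorem stmt0 {X : Type*} [TopologicalSpace X] [LocallyConnectedSpace X]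
    (f : X → ℝ) (hf : Continuous f) (x : X) (μ : ℝ) (hμ : f x < μ) :
    connectedComponentIn {y | f y < μ} x =
      ⋃ l ∈ Set.Ioo (f x) μ, connectedComponentIn {y | f y < l} x := by
  have ho : ∀ l : ℝ, IsOpen {y | f y < l} := fun l => isOpen_lt hf continuous_const
  have hm : ∀ (y : X) {l m : ℝ}, l ≤ m →
      connectedComponentIn {y | f y < l} y ⊆ connectedComponentIn {y | f y < m} y :=
    fun y l m h => connectedComponentIn_mono y (fun z (hz : f z < l) => lt_of_lt_of_le hz h)
  apply Set.Subset.antisymm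
  · set U := ⋃ l ∈ Set.Ioo (f x) μ, connectedComponentIn {y | f y < l} x with hU
    let V : Set X := ⋃ y ∈ Uᶜ, ⋃ l ∈ Set.Ioo (f y) μ, connectedComponentIn {z | f z < l} y
    have hUo : IsOpen U := isOpen_biUnion fun l _ => (ho l).connectedComponentIn
    have hVo : IsOpen V := isOpen_biUnion fun y _ => isOpen_biUnion fun l _ =>
      (ho l).connectedComponentIn
    have hd : Disjoint U V := by
      rw [Set.disjoint_left]
      intro z hzU hzV
      simp only [V, Set.mem_iUnion] at hzV
      obtain ⟨y, hy, l, hl, hz⟩ := hzV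
      have hzU' := hzU
      simp only [hU, Set.mem_iUnion] at hzU'
      obtain ⟨k, hk, hz'⟩ := hzU'
      apply hy
      have h1 := connectedComponentIn_eq (hm y (le_max_left l k) hz)
      have h2 := connectedComponentIn_eq (hm x (le_max_right l k) hz')
      simp only [hU, Set.mem_iUnion]
      refine ⟨max l k, ⟨lt_max_of_lt_right hk.1, max_lt hl.2 hk.2⟩, ?_⟩
      rw [h2, ← h1]
      exact mem_connectedComponentIn (lt_max_of_lt_left hl.1)
    refine isPreconnected_connectedComponentIn.subset_left_of_subset_union hUo hVo hd ?_ ?_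
    · intro y hy
      by_cases hyU : y ∈ U
      · exact Or.inl hyU
      · right
        have hyμ : f y < μ := connectedComponentIn_subset {y | f y < μ} x hy
        obtain ⟨l, h1, h2⟩ := exists_between hyμ
        simp only [V, Set.mem_iUnion]
        exact ⟨y, hyU, l, ⟨h1, h2⟩, mem_connectedComponentIn h1⟩
    · obtain ⟨l, h1, h2⟩ := exists_between hμ
      refine ⟨x, mem_connectedComponentIn hμ, ?_⟩
      simp only [hU, Set.mem_iUnion]
      exact ⟨l, ⟨h1, h2⟩, mem_connectedComponentIn h1⟩
  · exact Set.iUnion₂_subset fun l hl => hm x hl.2.le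
end

section
/- Let X be a compact Hausdorff topological space and f : X → ℝ a continuous function. Then for every x ∈ X and every real μ > f(x), the connected component of x in the closed sublevel set {f ≤ μ} is equal to the intersection, over all real λ > μ, of the connected components of x in {f ≤ λ}. (Lemma 2.2, equation (2.6), of the paper; the proof uses that a decreasing intersection of compact connected sets in a Hausdorff space is connected.) -/
theorem isPreconnected_iInter_aux {X ι : Type*} [TopologicalSpace X] [CompactSpace X] [T2Space X]
    [Nonempty ι] (V : ι → Set X) (hd : Directed (· ⊇ ·) V) (hc : ∀ i, IsClosed (V i))
    (hp : ∀ i, IsPreconnected (V i)) : IsPreconnected (⋂ i, V i) := by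
  rw [isPreconnected_iff_subset_of_fully_disjoint_closed (isClosed_iInter hc)]
  intro u v hu hv hs huv
  obtain ⟨u', v', hu', hv', huu, hvv, hdis⟩ := normal_separation hu hv huv
  obtain ⟨i, hi⟩ := exists_subset_nhds_of_compactSpace hd hc (U := u' ∪ v') (fun x hx =>
    (hu'.union hv').mem_nhds (Set.union_subset_union huu hvv (hs hx)))
  have hsi : (⋂ i, V i) ⊆ V i := Set.iInter_subset _ i
  rcases (hp i).subset_or_subset hu' hv' hdis hi with h | h
  · left
    intro y hy
    exact (hs hy).resolve_right fun hyv => Set.disjoint_left.1 hdis (h (hsi hy)) (hvv hyv)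
  · right
    intro y hy
    exact (hs hy).resolve_left fun hyu => Set.disjoint_left.1 hdis (huu hyu) (h (hsi hy))

theorem isClosed_connectedComponentIn_aux {X : Type*} [TopologicalSpace X] {F : Set X} {x : X}
    (hF : IsClosed F) : IsClosed (connectedComponentIn F x) := by
  by_cases h : x ∈ F
  · rw [connectedComponentIn_eq_image h]
    exact hF.isClosedEmbedding_subtypeVal.isClosedMap _ isClosed_connectedComponent
  · rw [connectedComponentIn_eq_empty h]
    exact isClosed_empty

/-- Lemma 2.2, equation (2.6): in a compact Hausdorff space, the connected component of `x`
in the closed sublevel set `{f ≤ μ}` is the intersection over `λ > μ` of the connected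
components of `x` in `{f ≤ λ}`. -/
theorem stmt1 {X : Type*} [TopologicalSpace X] [CompactSpace X] [T2Space X]
    (f : X → ℝ) (hf : Continuous f) (x : X) (μ : ℝ) (hμ : f x < μ) :
    connectedComponentIn {y | f y ≤ μ} x =
      ⋂ l ∈ Set.Ioi μ, connectedComponentIn {y | f y ≤ l} x := by
  have hmono : ∀ a b : ℝ, a ≤ b →
      connectedComponentIn {y | f y ≤ a} x ⊆ connectedComponentIn {y | f y ≤ b} x :=
    fun a b hab => connectedComponentIn_mono x fun y (hy : f y ≤ a) => hy.trans hab
  apply Set.Subset.antisymm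
  · exact Set.subset_iInter₂ fun l hl => hmono _ _ (le_of_lt hl)
  · rw [Set.biInter_eq_iInter]
    have : Nonempty (Set.Ioi μ) := ⟨⟨μ + 1, by simp⟩⟩
    apply IsPreconnected.subset_connectedComponentIn
    · apply isPreconnected_iInter_aux
      · intro a b
        exact ⟨min a b, hmono _ _ (Subtype.coe_le_coe.2 (min_le_left a b)),
          hmono _ _ (Subtype.coe_le_coe.2 (min_le_right a b))⟩
      · exact fun i => isClosed_connectedComponentIn_aux (isClosed_le hf continuous_const)
      · exact fun i => isPreconnected_connectedComponentIn
    · refine Set.mem_iInter.2 fun i => mem_connectedComponentIn ?_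
      exact (hμ.trans i.2).le
    · intro y hy
      change f y ≤ μ
      refine le_of_forall_gt_imp_ge_of_dense fun l hl => ?_
      exact connectedComponentIn_subset {y | f y ≤ l} x (Set.mem_iInter.1 hy ⟨l, hl⟩)
end

section
/- Let X be a locally path-connected topological space, A ⊆ X a nonempty subset, f : X → ℝ continuous, and x ∈ X. Assume that the set Λ(x) = {λ ∈ ℝ : λ > f(x) and the connected component of x in {f < λ} is disjoint from A} is nonempty, and that there exists at least one continuous path from x to A. Then Λ(x) is bounded above and sup Λ(x) equals the infimum, over all continuous paths γ : [0,1] → X with γ(0) = x and γ(1) ∈ A, of max_{t∈[0,1]} f(γ(t)). (Lemma 2.3 of the paper: the path height H_f(x) of equation (1.7) coincides with the quantity λ(x) of equation (2.3).) -/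
/-- Lemma 2.3 of the paper: in a locally path-connected space, the supremum `λ(x)` of the
levels `λ > f(x)` whose open well around `x` avoids `A` equals the path height
`H_f(x) = inf over paths γ from x to A of max f∘γ`. -/
theorem stmt3 {X : Type*} [TopologicalSpace X] [LocallyPathConnectedSpace X]
    (A : Set X) (hA : A.Nonempty) (f : X → ℝ) (hf : Continuous f) (x : X)
    (hΛ : {l : ℝ | f x < l ∧ connectedComponentIn {y | f y < l} x ∩ A = ∅}.Nonempty)
    (hpath : ∃ γ : unitInterval → X, Continuous γ ∧ γ 0 = x ∧ γ 1 ∈ A) :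
    BddAbove {l : ℝ | f x < l ∧ connectedComponentIn {y | f y < l} x ∩ A = ∅} ∧
    sSup {l : ℝ | f x < l ∧ connectedComponentIn {y | f y < l} x ∩ A = ∅} =
      sInf {m : ℝ | ∃ γ : unitInterval → X, Continuous γ ∧ γ 0 = x ∧ γ 1 ∈ A ∧
        m = sSup (Set.range (f ∘ γ))} := by
  have key : ∀ l ∈ {l : ℝ | f x < l ∧ connectedComponentIn {y | f y < l} x ∩ A = ∅},
      ∀ m ∈ {m : ℝ | ∃ γ : unitInterval → X, Continuous γ ∧ γ 0 = x ∧ γ 1 ∈ A ∧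
        m = sSup (Set.range (f ∘ γ))}, l ≤ m := by
    rintro l ⟨hl, hd⟩ m ⟨γ, hγ, h0, h1, rfl⟩
    by_contra! hlt
    have hb : BddAbove (Set.range (f ∘ γ)) := (isCompact_range (hf.comp hγ)).bddAbove
    have hsub : Set.range γ ⊆ {y | f y < l} := by
      rintro _ ⟨t, rfl⟩
      exact lt_of_le_of_lt (le_csSup hb ⟨t, rfl⟩) hlt
    have hc := (isPreconnected_range hγ).subset_connectedComponentIn ⟨0, h0⟩ hsub
    have : γ 1 ∈ connectedComponentIn {y | f y < l} x ∩ A := ⟨hc ⟨1, rfl⟩, h1⟩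
    rw [hd] at this
    exact this
  have hne : {m : ℝ | ∃ γ : unitInterval → X, Continuous γ ∧ γ 0 = x ∧ γ 1 ∈ A ∧
        m = sSup (Set.range (f ∘ γ))}.Nonempty := by
    obtain ⟨γ, hγ, h0, h1⟩ := hpath
    exact ⟨_, γ, hγ, h0, h1, rfl⟩
  have hbdd : BddAbove {l : ℝ | f x < l ∧ connectedComponentIn {y | f y < l} x ∩ A = ∅} := by
    obtain ⟨m, hm⟩ := hne
    exact ⟨m, fun l hl => key l hl m hm⟩
  have hbel : BddBelow {m : ℝ | ∃ γ : unitInterval → X, Continuous γ ∧ γ 0 = x ∧ γ 1 ∈ A ∧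
        m = sSup (Set.range (f ∘ γ))} := by
    obtain ⟨l, hl⟩ := hΛ
    exact ⟨l, fun m hm => key l hl m hm⟩
  refine ⟨hbdd, le_antisymm (csSup_le hΛ fun l hl => le_csInf hne fun m hm => key l hl m hm) ?_⟩
  refine le_of_forall_gt_imp_ge_of_dense fun l hl => ?_
  obtain ⟨l0, hl0⟩ := hΛ
  have hxl : f x < l := hl0.1.trans_le ((le_csSup hbdd hl0).trans hl.le)
  have hn : (connectedComponentIn {y | f y < l} x ∩ A).Nonempty := by
    rw [Set.nonempty_iff_ne_empty]
    intro he
    exact absurd (le_csSup hbdd ⟨hxl, he⟩) (not_le.mpr hl)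
  obtain ⟨a, hac, haA⟩ := hn
  have hop : IsOpen {y | f y < l} := isOpen_lt hf continuous_const
  have hpc := (hop.connectedComponentIn (x := x)).isConnected_iff_isPathConnected.mp
    (isConnected_connectedComponentIn_iff.mpr hxl)
  obtain ⟨γ, hγ⟩ := hpc.joinedIn x (mem_connectedComponentIn hxl) a hac
  refine (csInf_le hbel ⟨γ, γ.continuous, γ.source, by rw [γ.target]; exact haA, rfl⟩).trans ?_
  refine csSup_le (Set.range_nonempty _) ?_
  rintro _ ⟨t, rfl⟩
  have ht : γ t ∈ {y | f y < l} := connectedComponentIn_subset _ _ (hγ t)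
  exact le_of_lt ht
end

section
/- Let X be a locally connected topological space, A ⊆ X a subset, f : X → ℝ continuous, and x ∈ X. Assume the set Λ(x) = {λ ∈ ℝ : λ > f(x) and the connected component of x in {f < λ} is disjoint from A} is nonempty and bounded above, and put λ(x) = sup Λ(x). Then the connected component of x in {f < λ(x)} is itself disjoint from A. (First assertion of Proposition 2.5 of the paper: each well C(x) = C(λ(x),x) is contained in Ω, i.e. does not meet the boundary; proved via the union formula of Lemma 2.2.) -/
/-- First assertion of Proposition 2.5: the open well of `x` at the critical level
`λ(x) = sup Λ(x)` is still disjoint from the boundary set `A`. -/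
theorem stmt4 {X : Type*} [TopologicalSpace X] [LocallyConnectedSpace X]
    (A : Set X) (f : X → ℝ) (hf : Continuous f) (x : X)
    (Λ : Set ℝ)
    (hΛ : Λ = {l : ℝ | f x < l ∧ connectedComponentIn {y | f y < l} x ∩ A = ∅})
    (hne : Λ.Nonempty) (hbdd : BddAbove Λ) :
    connectedComponentIn {y | f y < sSup Λ} x ∩ A = ∅ := by
  have hop : ∀ l : ℝ, IsOpen {y | f y < l} := fun l => isOpen_lt hf continuous_const
  have hmono : ∀ {a b : ℝ} (z : X), a ≤ b →
      connectedComponentIn {y | f y < a} z ⊆ connectedComponentIn {y | f y < b} z :=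
    fun z hab => connectedComponentIn_mono z (fun y hy => lt_of_lt_of_le hy hab)
  set U : Set X := ⋃ l ∈ Λ, connectedComponentIn {y | f y < l} x with hU
  set V : Set X := ⋃ y ∈ Uᶜ, ⋃ l ∈ Λ, connectedComponentIn {z | f z < l} y with hV
  have hUo : IsOpen U := isOpen_biUnion fun l _ => (hop l).connectedComponentIn
  have hVo : IsOpen V :=
    isOpen_biUnion fun y _ => isOpen_biUnion fun l _ => (hop l).connectedComponentIn
  have hdisj : Disjoint U V := by
    rw [Set.disjoint_left]
    intro z hzU hzV
    simp only [hU, Set.mem_iUnion] at hzU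
    simp only [hV, Set.mem_iUnion] at hzV
    obtain ⟨l, hl, hzl⟩ := hzU
    obtain ⟨y, hy, k, hk, hzk⟩ := hzV
    apply hy
    have hm : max l k ∈ Λ := by
      rcases max_choice l k with h | h <;> rw [h] <;> assumption
    have h1 := hmono x (le_max_left l k) hzl
    have h2 := hmono y (le_max_right l k) hzk
    have hyk : y ∈ {z | f z < max l k} := connectedComponentIn_nonempty_iff.mp ⟨z, h2⟩
    have h3 := (connectedComponentIn_eq h1).trans (connectedComponentIn_eq h2).symm
    refine Set.mem_biUnion hm ?_
    show y ∈ connectedComponentIn {y | f y < max l k} x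
    rw [h3]
    exact mem_connectedComponentIn hyk
  have hcov : connectedComponentIn {y | f y < sSup Λ} x ⊆ U ∪ V := by
    intro y hy
    by_cases hyU : y ∈ U
    · exact Or.inl hyU
    · right
      have hyL : f y < sSup Λ := connectedComponentIn_subset {y | f y < sSup Λ} x hy
      obtain ⟨l, hl, hyl⟩ := exists_lt_of_lt_csSup hne hyL
      exact Set.mem_biUnion hyU (Set.mem_biUnion hl (mem_connectedComponentIn hyl))
  obtain ⟨l, hl⟩ := hne
  have hxl : f x < l := by rw [hΛ] at hl; exact hl.1
  have hxU : x ∈ U := Set.mem_biUnion hl (mem_connectedComponentIn hxl)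
  have hxC : x ∈ connectedComponentIn {y | f y < sSup Λ} x :=
    mem_connectedComponentIn (lt_of_lt_of_le hxl (le_csSup hbdd hl))
  have hsub := isPreconnected_connectedComponentIn.subset_left_of_subset_union hUo hVo hdisj hcov
    ⟨x, hxC, hxU⟩
  rw [Set.eq_empty_iff_forall_notMem]
  rintro y ⟨hy, hyA⟩
  have hyU := hsub hy
  simp only [hU, Set.mem_iUnion] at hyU
  obtain ⟨k, hk, hyk⟩ := hyU
  have hk2 : connectedComponentIn {y | f y < k} x ∩ A = ∅ := by rw [hΛ] at hk; exact hk.2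
  exact Set.eq_empty_iff_forall_notMem.mp hk2 y ⟨hyk, hyA⟩
end

section
/- Let X be a locally connected topological space, A ⊆ X a subset, f : X → ℝ continuous, and let x, y ∈ X be two points such that the sets Λ(x) and Λ(y) (defined as Λ(z) = {λ > f(z) : the connected component of z in {f < λ} is disjoint from A}) are both nonempty and bounded above; put λ(x) = sup Λ(x) and λ(y) = sup Λ(y). If the connected component of x in {f < λ(x)} intersects the connected component of y in {f < λ(y)}, then λ(x) = λ(y) and the two connected components coincide. In particular the family of maximal wells (C(x))_{x} consists of pairwise disjoint or identical sets. (Second assertion of Proposition 2.5 of the paper, Step 2 of its proof.) -/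
theorem aux_union {X : Type*} [TopologicalSpace X] [LocallyConnectedSpace X]
    (f : X → ℝ) (hf : Continuous f) (y : X) (b : ℝ) (hy : f y < b) :
    connectedComponentIn {w | f w < b} y ⊆
      ⋃ l ∈ Set.Iio b, connectedComponentIn {w | f w < l} y := by
  have ho : ∀ l, IsOpen {w | f w < l} := fun l => isOpen_lt hf continuous_const
  apply isPreconnected_connectedComponentIn.subset_of_closure_inter_subset
  · exact isOpen_biUnion fun l _ => (ho l).connectedComponentIn
  · obtain ⟨l, h1, h2⟩ := exists_between hy
    refine ⟨y, mem_connectedComponentIn hy, ?_⟩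
    simp only [Set.mem_iUnion]
    exact ⟨l, h2, mem_connectedComponentIn h1⟩
  · rintro q ⟨hq, hqb⟩
    have hqb' : f q < b := (connectedComponentIn_subset {w | f w < b} y) hqb
    obtain ⟨l, h1, h2⟩ := exists_between hqb'
    have hn := connectedComponentIn_mem_nhds ((ho l).mem_nhds h1)
    obtain ⟨p, hp1, hp2⟩ := mem_closure_iff_nhds.1 hq _ hn
    simp only [Set.mem_iUnion] at hp2 ⊢
    obtain ⟨m, hm, hp2⟩ := hp2
    refine ⟨max l m, max_lt h2 hm, ?_⟩
    have e1 := connectedComponentIn_mono q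
      (show {w | f w < l} ⊆ {w | f w < max l m} from
        fun w (hw : f w < _) => (lt_of_lt_of_le hw (le_max_left l m) : f w < max l m)) hp1
    have e2 := connectedComponentIn_mono y
      (show {w | f w < m} ⊆ {w | f w < max l m} from
        fun w (hw : f w < _) => (lt_of_lt_of_le hw (le_max_right l m) : f w < max l m)) hp2
    rw [connectedComponentIn_eq e2, ← connectedComponentIn_eq e1]
    exact mem_connectedComponentIn (show f q < max l m from lt_of_lt_of_le h1 (le_max_left _ _))

theorem aux_le {X : Type*} [TopologicalSpace X] [LocallyConnectedSpace X]
    (A : Set X) (f : X → ℝ) (hf : Continuous f) (x y : X)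
    (Λ : X → Set ℝ)
    (hΛ : ∀ z, Λ z = {l : ℝ | f z < l ∧ connectedComponentIn {w | f w < l} z ∩ A = ∅})
    (hxne : (Λ x).Nonempty) (hxbdd : BddAbove (Λ x))
    (hyne : (Λ y).Nonempty) (hybdd : BddAbove (Λ y))
    (hinter : (connectedComponentIn {w | f w < sSup (Λ x)} x ∩
               connectedComponentIn {w | f w < sSup (Λ y)} y).Nonempty) :
    sSup (Λ y) ≤ sSup (Λ x) := by
  by_contra! hlt
  obtain ⟨p, hp1, hp2⟩ := hinter
  have hx : x ∈ {w | f w < sSup (Λ x)} := connectedComponentIn_nonempty_iff.1 ⟨p, hp1⟩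
  replace hx : f x < sSup (Λ x) := hx
  have hy : y ∈ {w | f w < sSup (Λ y)} := connectedComponentIn_nonempty_iff.1 ⟨p, hp2⟩
  replace hy : f y < sSup (Λ y) := hy
  have e1 := connectedComponentIn_mono x
    (show {w | f w < sSup (Λ x)} ⊆ {w | f w < sSup (Λ y)} from
      fun w hw => lt_trans hw hlt) hp1
  have hb : sSup (Λ y) ∈ Λ x := by
    rw [hΛ x]
    refine ⟨hx.trans hlt, ?_⟩
    rw [connectedComponentIn_eq e1, ← connectedComponentIn_eq hp2]
    rw [Set.eq_empty_iff_forall_notMem]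
    rintro q ⟨hq, hqA⟩
    have := aux_union f hf y _ hy hq
    simp only [Set.mem_iUnion] at this
    obtain ⟨l, hl, hql⟩ := this
    obtain ⟨m, hm, hlm⟩ := exists_lt_of_lt_csSup hyne hl
    rw [hΛ y] at hm
    have hqm := connectedComponentIn_mono y
      (show {w | f w < l} ⊆ {w | f w < m} from fun w hw => lt_trans hw hlm) hql
    exact Set.eq_empty_iff_forall_notMem.1 hm.2 q ⟨hqm, hqA⟩
  exact absurd (le_csSup hxbdd hb) (not_le.2 hlt)

/-- Second assertion of Proposition 2.5 (Step 2 of its proof): two maximal wells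
`C(x)` and `C(y)` either coincide (with `λ(x) = λ(y)`) or are disjoint. -/
theorem stmt5 {X : Type*} [TopologicalSpace X] [LocallyConnectedSpace X]
    (A : Set X) (f : X → ℝ) (hf : Continuous f) (x y : X)
    (Λ : X → Set ℝ)
    (hΛ : ∀ z, Λ z = {l : ℝ | f z < l ∧ connectedComponentIn {w | f w < l} z ∩ A = ∅})
    (hxne : (Λ x).Nonempty) (hxbdd : BddAbove (Λ x))
    (hyne : (Λ y).Nonempty) (hybdd : BddAbove (Λ y))
    (hinter : (connectedComponentIn {w | f w < sSup (Λ x)} x ∩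
               connectedComponentIn {w | f w < sSup (Λ y)} y).Nonempty) :
    sSup (Λ x) = sSup (Λ y) ∧
    connectedComponentIn {w | f w < sSup (Λ x)} x =
      connectedComponentIn {w | f w < sSup (Λ y)} y := by
  have h : sSup (Λ x) = sSup (Λ y) := le_antisymm
    (aux_le A f hf y x Λ hΛ hyne hybdd hxne hxbdd (by rwa [Set.inter_comm]))
    (aux_le A f hf x y Λ hΛ hxne hxbdd hyne hybdd hinter)
  refine ⟨h, ?_⟩
  obtain ⟨p, hp1, hp2⟩ := hinter
  rw [connectedComponentIn_eq hp1, connectedComponentIn_eq hp2, h]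
end

section
/- Let X be a compact Hausdorff topological space, A ⊆ X a closed subset, f : X → ℝ continuous, and x ∈ X. Assume the set Λ(x) = {λ ∈ ℝ : λ > f(x) and the connected component of x in {f < λ} is disjoint from A} is nonempty and bounded above, and put λ(x) = sup Λ(x). Then the connected component of x in the closed sublevel set {f ≤ λ(x)} has nonempty intersection with A. (This is the key compactness argument in Step 5 of the proof of Proposition 2.5 and in Lemma 2.6 of the paper: the closed well at the critical level λ(x) reaches the boundary; it is proved by combining the intersection formula of Lemma 2.2 with a decreasing intersection of nonempty compact sets.) -/
theorem preconn_iInter_aux {X ι : Type*} [TopologicalSpace X] [CompactSpace X] [T2Space X]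
    [Nonempty ι] (C : ι → Set X) (hd : Directed (· ⊇ ·) C) (hc : ∀ i, IsClosed (C i))
    (hp : ∀ i, IsPreconnected (C i)) : IsPreconnected (⋂ i, C i) := by
  rw [isPreconnected_iff_subset_of_fully_disjoint_closed (isClosed_iInter hc)]
  intro u v hu hv huv hdis
  obtain ⟨U, V, hU, hV, huU, hvV, hUV⟩ := normal_separation hu hv hdis
  obtain ⟨i, hi⟩ := exists_subset_nhds_of_isCompact' hd (fun i => (hc i).isCompact) hc
    (U := U ∪ V) (fun y hy => (hU.union hV).mem_nhds
      ((huv hy).imp (fun h => huU h) (fun h => hvV h)))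
  rcases (hp i).subset_or_subset hU hV hUV hi with h | h
  · left
    intro y hy
    exact (huv hy).resolve_right fun hyv =>
      Set.disjoint_left.1 hUV (h (Set.mem_iInter.1 hy i)) (hvV hyv)
  · right
    intro y hy
    exact (huv hy).resolve_left fun hyv =>
      Set.disjoint_left.1 hUV (huU hyv) (h (Set.mem_iInter.1 hy i))

/-- Key compactness argument of Step 5 of the proof of Proposition 2.5 and Lemma 2.6:
the closed well of `x` at the critical level `λ(x) = sup Λ(x)` reaches the boundary `A`. -/
theorem stmt6 {X : Type*} [TopologicalSpace X] [CompactSpace X] [T2Space X]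
    (A : Set X) (hA : IsClosed A) (f : X → ℝ) (hf : Continuous f) (x : X)
    (Λ : Set ℝ)
    (hΛ : Λ = {l : ℝ | f x < l ∧ connectedComponentIn {y | f y < l} x ∩ A = ∅})
    (hne : Λ.Nonempty) (hbdd : BddAbove Λ) :
    (connectedComponentIn {y | f y ≤ sSup Λ} x ∩ A).Nonempty := by
  have hxs : f x < sSup Λ := by
    obtain ⟨l, hl⟩ := hne
    have h1 := le_csSup hbdd hl
    rw [hΛ] at hl
    exact lt_of_lt_of_le hl.1 h1
  have hmeet : ∀ m, sSup Λ < m → (connectedComponentIn {y | f y < m} x ∩ A).Nonempty := by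
    intro m hm
    by_contra h
    have : m ∈ Λ := by
      rw [hΛ]
      exact ⟨hxs.trans hm, Set.not_nonempty_iff_eq_empty.1 h⟩
    exact absurd (le_csSup hbdd this) (not_le.2 hm)
  generalize sSup Λ = s at *
  let C : Set.Ioi s → Set X := fun m => closure (connectedComponentIn {y | f y < m.1} x)
  have hmono : ∀ a b : Set.Ioi s, a ≤ b → C a ⊆ C b := fun a b hab =>
    closure_mono (connectedComponentIn_mono x fun y (hy : f y < a.1) =>
      lt_of_lt_of_le hy hab)
  have hd : Directed (· ⊇ ·) C := fun a b =>
    ⟨min a b, hmono _ _ (min_le_left _ _), hmono _ _ (min_le_right _ _)⟩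
  have hdA : Directed (· ⊇ ·) (fun m => C m ∩ A) := fun a b =>
    ⟨min a b, Set.inter_subset_inter_left _ (hmono _ _ (min_le_left _ _)),
      Set.inter_subset_inter_left _ (hmono _ _ (min_le_right _ _))⟩
  have hcl : ∀ m, IsClosed (C m) := fun m => isClosed_closure
  have hpre := preconn_iInter_aux C hd hcl
    (fun m => isPreconnected_connectedComponentIn.closure)
  have hxK : x ∈ ⋂ m, C m := Set.mem_iInter.2 fun m =>
    subset_closure (mem_connectedComponentIn (hxs.trans m.2))
  have hsub : (⋂ m, C m) ⊆ {y | f y ≤ s} := by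
    intro y hy
    show f y ≤ s
    refine le_of_forall_gt_imp_ge_of_dense fun m hm => ?_
    have h1 : C ⟨m, hm⟩ ⊆ {y | f y ≤ m} :=
      closure_minimal (fun z hz => le_of_lt (show f z < m from connectedComponentIn_subset {y | f y < m} x hz))
        (isClosed_le hf continuous_const)
    exact h1 (Set.mem_iInter.1 hy ⟨m, hm⟩)
  obtain ⟨y, hy⟩ := IsCompact.nonempty_iInter_of_directed_nonempty_isCompact_isClosed
    (fun m => C m ∩ A) hdA
    (fun m => (hmeet m.1 m.2).mono (Set.inter_subset_inter_left _ subset_closure))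
    (fun m => ((hcl m).inter hA).isCompact) (fun m => (hcl m).inter hA)
  rw [Set.mem_iInter] at hy
  exact ⟨y, hpre.subset_connectedComponentIn hxK hsub (Set.mem_iInter.2 fun m => (hy m).1),
    (hy ⟨s + 1, by simp⟩).2⟩
end

section
/- Let X be a locally connected topological space, f : X → ℝ continuous, λ ∈ ℝ, and let x ≠ y be two points lying in a common connected component C of {f < λ} (i.e. y belongs to the connected component of x in {f < λ}). Assume the set S = {μ ∈ ℝ : μ > f(y) and x does not belong to the connected component of y in {f < μ}} is nonempty. Then S ⊆ (f(y), λ); consequently λ_x(y) := sup S satisfies f(y) < λ_x(y) < λ, and moreover x does not belong to the connected component of y in {f < λ_x(y)}. (Equations (2.20)–(2.22) and Step 1 of the proof of Proposition 2.7 of the paper: the separating value λ_x(y) is strictly between f(y) and λ, and the open well of y at level λ_x(y) does not contain x.) -/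
theorem key_aux {X : Type*} [TopologicalSpace X] [LocallyConnectedSpace X]
    (f : X → ℝ) (hf : Continuous f) (m : ℝ) (x y : X)
    (hx : x ∈ connectedComponentIn {z | f z < m} y) :
    ∃ m' < m, x ∈ connectedComponentIn {z | f z < m'} y := by
  have hop : ∀ c : ℝ, IsOpen {z | f z < c} := fun c => isOpen_lt hf continuous_const
  have hmono : ∀ (z : X) {a b : ℝ}, a ≤ b →
      connectedComponentIn {z | f z < a} z ⊆ connectedComponentIn {z | f z < b} z :=
    fun z a b hab => connectedComponentIn_mono z (fun w hw => lt_of_lt_of_le hw hab)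
  have hym : y ∈ {z | f z < m} := connectedComponentIn_nonempty_iff.1 ⟨x, hx⟩
  have hU : IsOpen {w | ∃ m' < m, w ∈ connectedComponentIn {z | f z < m'} y} := by
    have : {w | ∃ m' < m, w ∈ connectedComponentIn {z | f z < m'} y} =
        ⋃ m' : ℝ, ⋃ _ : m' < m, connectedComponentIn {z | f z < m'} y := by
      ext w; simp
    rw [this]
    exact isOpen_iUnion fun c => isOpen_iUnion fun _ => (hop c).connectedComponentIn
  refine isPreconnected_connectedComponentIn.subset_of_closure_inter_subset hU ?_ ?_ hx
  · obtain ⟨c, hc1, hc2⟩ := exists_between (show f y < m from hym)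
    exact ⟨y, mem_connectedComponentIn hym, c, hc2, mem_connectedComponentIn hc1⟩
  · rintro z ⟨hz, hzC⟩
    have hzm : f z < m := connectedComponentIn_subset {z | f z < m} y hzC
    obtain ⟨c, hc1, hc2⟩ := exists_between hzm
    have hzc : z ∈ connectedComponentIn {z | f z < c} z := mem_connectedComponentIn hc1
    obtain ⟨w, hwz, d, hd, hwy⟩ := mem_closure_iff.1 hz _ (hop c).connectedComponentIn hzc
    refine ⟨max c d, max_lt hc2 hd, ?_⟩
    have h1 := hmono z (le_max_left c d) hwz
    have h2 := hmono y (le_max_right c d) hwy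
    rw [connectedComponentIn_eq h2, ← connectedComponentIn_eq h1]
    exact hmono z (le_max_left c d) hzc

/-- Equations (2.20)–(2.22) and Step 1 of the proof of Proposition 2.7: the separating
value `λ_x(y) = sup S` lies strictly between `f(y)` and `λ`, and the open well of `y`
at level `λ_x(y)` does not contain `x`. -/
theorem stmt7 {X : Type*} [TopologicalSpace X] [LocallyConnectedSpace X]
    (f : X → ℝ) (hf : Continuous f) (l : ℝ) (x y : X) (hxy : x ≠ y)
    (hy : y ∈ connectedComponentIn {z | f z < l} x)
    (S : Set ℝ)
    (hS : S = {μ : ℝ | f y < μ ∧ x ∉ connectedComponentIn {z | f z < μ} y})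
    (hSne : S.Nonempty) :
    S ⊆ Set.Ioo (f y) l ∧ f y < sSup S ∧ sSup S < l ∧
      x ∉ connectedComponentIn {z | f z < sSup S} y := by
  have hmono : ∀ {a b : ℝ}, a ≤ b →
      connectedComponentIn {z | f z < a} y ⊆ connectedComponentIn {z | f z < b} y :=
    fun {a b} hab => connectedComponentIn_mono y (fun w hw => lt_of_lt_of_le hw hab)
  have hxl : x ∈ connectedComponentIn {z | f z < l} y := by
    rw [← connectedComponentIn_eq hy]
    exact mem_connectedComponentIn (connectedComponentIn_nonempty_iff.1 ⟨y, hy⟩)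
  have hlt : ∀ c, x ∈ connectedComponentIn {z | f z < c} y → ∀ μ ∈ S, μ < c := by
    intro c hc μ hμ
    rw [hS] at hμ
    by_contra! h
    exact hμ.2 (hmono h hc)
  have hbdd : BddAbove S := ⟨l, fun μ hμ => (hlt l hxl μ hμ).le⟩
  have hfy : ∀ μ ∈ S, f y < μ := by
    intro μ hμ
    rw [hS] at hμ
    exact hμ.1
  refine ⟨fun μ hμ => ⟨hfy μ hμ, hlt l hxl μ hμ⟩, ?_, ?_, ?_⟩
  · obtain ⟨μ, hμ⟩ := hSne
    exact (hfy μ hμ).trans_le (le_csSup hbdd hμ)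
  · obtain ⟨c, hc, hxc⟩ := key_aux f hf l x y hxl
    exact (csSup_le hSne fun μ hμ => (hlt c hxc μ hμ).le).trans_lt hc
  · intro h
    obtain ⟨c, hc, hxc⟩ := key_aux f hf _ x y h
    exact absurd (csSup_le hSne fun μ hμ => (hlt c hxc μ hμ).le) (not_le.2 hc)
end

section
/- Let X be a compact Hausdorff locally connected topological space, f : X → ℝ continuous, λ ∈ ℝ, and let x ≠ y be two points lying in a common connected component of {f < λ}, such that the set S = {μ > f(y) : x does not belong to the connected component of y in {f < μ}} is nonempty; put λ_x(y) = sup S. Then x belongs to the connected component of y in the closed sublevel set {f ≤ λ_x(y)}. Moreover, if f(x) < λ_x(y), then x does not belong to the closure of the connected component of y in {f < λ_x(y)}, so that this closure is strictly contained in the connected component of y in {f ≤ λ_x(y)} (in particular the closure of the open well of y at level λ_x(y) is not a connected component of {f ≤ λ_x(y)}). (Step 1 of the proof of Proposition 2.7 of the paper, around equations (2.25)–(2.26).) -/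
/-- Step 1 of the proof of Proposition 2.7 (around (2.25)–(2.26)): `x` belongs to the
closed well of `y` at the separating level `λ_x(y) = sup S`; if moreover `f(x) < λ_x(y)`,
then `x` is not in the closure of the open well of `y` at that level, so this closure is
strictly contained in the closed well. -/
theorem stmt8 {X : Type*} [TopologicalSpace X] [CompactSpace X] [T2Space X]
    [LocallyConnectedSpace X]
    (f : X → ℝ) (hf : Continuous f) (l : ℝ) (x y : X) (hxy : x ≠ y)
    (hx : x ∈ connectedComponentIn {z | f z < l} y)
    (S : Set ℝ)
    (hS : S = {μ : ℝ | f y < μ ∧ x ∉ connectedComponentIn {z | f z < μ} y})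
    (hSne : S.Nonempty) :
    x ∈ connectedComponentIn {z | f z ≤ sSup S} y ∧
    (f x < sSup S →
      x ∉ closure (connectedComponentIn {z | f z < sSup S} y) ∧
      closure (connectedComponentIn {z | f z < sSup S} y) ⊂
        connectedComponentIn {z | f z ≤ sSup S} y) := by
  have hmono : ∀ {a b : ℝ}, a ≤ b → connectedComponentIn {z | f z < a} y ⊆
      connectedComponentIn {z | f z < b} y := fun h =>
    connectedComponentIn_mono y (fun z (hz : f z < _) => lt_of_lt_of_le hz h)
  have hsubf : ∀ {a : ℝ} {z : X}, z ∈ connectedComponentIn {z | f z < a} y → f z < a := by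
    intro a z hz
    have h := connectedComponentIn_subset {z | f z < a} y hz
    exact h
  have hbdd : BddAbove S := by
    refine ⟨l, fun μ hμ => ?_⟩
    rw [hS] at hμ
    by_contra hlt
    exact hμ.2 (hmono (not_le.mp hlt).le hx)
  have hym : f y < sSup S := by
    obtain ⟨μ, hμ⟩ := hSne
    have h1 := le_csSup hbdd hμ
    rw [hS] at hμ
    exact lt_of_lt_of_le hμ.1 h1
  have habove : ∀ μ, sSup S < μ → x ∈ connectedComponentIn {z | f z < μ} y := by
    intro μ hμ
    by_contra hn
    have : μ ∈ S := by
      rw [hS]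
      exact ⟨hym.trans hμ, hn⟩
    exact absurd (le_csSup hbdd this) (not_le.mpr hμ)
  have hbelow : ∀ μ, μ < sSup S → x ∉ connectedComponentIn {z | f z < μ} y := by
    intro μ hμ hn
    obtain ⟨ν, hν, hlt⟩ := exists_lt_of_lt_csSup hSne hμ
    rw [hS] at hν
    exact hν.2 (hmono hlt.le hn)
  generalize sSup S = m at *
  have hxm : f x ≤ m := by
    refine le_of_forall_gt_imp_ge_of_dense fun μ hμ => ?_
    have : f x < μ := hsubf (habove μ hμ)
    exact this.le
  have hopen : ∀ a : ℝ, IsOpen {z | f z < a} := fun a => isOpen_lt hf continuous_const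
  have hclosed : IsClosed {z | f z ≤ m} := isClosed_le hf continuous_const
  have part1 : x ∈ connectedComponentIn {z | f z ≤ m} y := by
    by_contra hn
    have hyF : y ∈ {z | f z ≤ m} := hym.le
    have hxF : x ∈ {z | f z ≤ m} := hxm
    haveI : CompactSpace {z | f z ≤ m} := isCompact_iff_compactSpace.mp hclosed.isCompact
    have hn' : (⟨x, hxF⟩ : {z | f z ≤ m}) ∉ connectedComponent (⟨y, hyF⟩ : {z | f z ≤ m}) := by
      intro h
      apply hn
      rw [connectedComponentIn_eq_image hyF]
      exact ⟨_, h, rfl⟩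
    rw [connectedComponent_eq_iInter_isClopen] at hn'
    simp only [Set.mem_iInter, not_forall] at hn'
    obtain ⟨⟨Z, hZ, hyZ⟩, hxZ⟩ := hn'
    have hxZ : (⟨x, hxF⟩ : {z | f z ≤ m}) ∉ Z := hxZ
    have c1 : IsCompact ((↑) '' Z : Set X) := hZ.1.isCompact.image continuous_subtype_val
    have c2 : IsCompact ((↑) '' Zᶜ : Set X) :=
      hZ.compl.1.isCompact.image continuous_subtype_val
    have hd : Disjoint ((↑) '' Z : Set X) ((↑) '' Zᶜ : Set X) :=
      (Set.disjoint_image_iff Subtype.val_injective).mpr disjoint_compl_right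
    obtain ⟨U, V, hU, hV, hZU, hZV, hUV⟩ := SeparatedNhds.of_isCompact_isCompact c1 c2 hd
    have hK : IsCompact (U ∪ V)ᶜ := (hU.union hV).isClosed_compl.isCompact
    have hKm : ∀ z ∈ (U ∪ V)ᶜ, m < f z := by
      intro z hz
      by_contra hzm
      apply hz
      by_cases hzZ : (⟨z, not_lt.mp hzm⟩ : {z | f z ≤ m}) ∈ Z
      · exact Or.inl (hZU ⟨_, hzZ, rfl⟩)
      · exact Or.inr (hZV ⟨_, hzZ, rfl⟩)
    have hμ : ∃ μ, m < μ ∧ ∀ z ∈ (U ∪ V)ᶜ, μ ≤ f z := by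
      rcases ((U ∪ V)ᶜ).eq_empty_or_nonempty with he | hne
      · refine ⟨m + 1, by linarith, fun z hz => ?_⟩
        rw [he] at hz
        exact hz.elim
      · obtain ⟨z, hz, hmin⟩ := hK.exists_isMinOn hne hf.continuousOn
        exact ⟨f z, hKm z hz, fun w hw => hmin hw⟩
    obtain ⟨μ, hmμ, hμ⟩ := hμ
    have hsub : connectedComponentIn {z | f z < μ} y ⊆ U ∪ V := by
      intro z hz
      by_contra hz'
      have h1 : f z < μ := hsubf hz
      exact absurd (hμ z hz') (not_le.mpr h1)
    have hyU : y ∈ U := hZU ⟨_, hyZ, rfl⟩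
    have hxV : x ∈ V := hZV ⟨_, hxZ, rfl⟩
    have hyC : y ∈ connectedComponentIn {z | f z < μ} y :=
      mem_connectedComponentIn (hym.trans hmμ)
    obtain ⟨w, -, hwU, hwV⟩ := isPreconnected_connectedComponentIn U V hU hV hsub
      ⟨y, hyC, hyU⟩ ⟨x, habove μ hmμ, hxV⟩
    exact Set.disjoint_left.mp hUV hwU hwV
  refine ⟨part1, fun hlt => ?_⟩
  have hxC : x ∉ connectedComponentIn {z | f z < m} y := by
    intro hxC
    have key : connectedComponentIn {z | f z < m} y ⊆
        ⋃ μ : Set.Iio m, connectedComponentIn {z | f z < (μ : ℝ)} y := by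
      refine isPreconnected_connectedComponentIn.subset_of_closure_inter_subset
        (isOpen_iUnion fun μ => (hopen μ).connectedComponentIn) ?_ ?_
      · obtain ⟨μ, h1, h2⟩ := exists_between hym
        exact ⟨y, mem_connectedComponentIn hym,
          Set.mem_iUnion.mpr ⟨⟨μ, h2⟩, mem_connectedComponentIn h1⟩⟩
      · rintro z ⟨hz, hzC⟩
        have hzm : f z < m := hsubf hzC
        obtain ⟨ν, h1, h2⟩ := exists_between hzm
        obtain ⟨w, hw, hwD⟩ := mem_closure_iff.mp hz _
          ((hopen ν).connectedComponentIn (x := z)) (mem_connectedComponentIn h1)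
        obtain ⟨⟨μ, hμ⟩, hwμ⟩ := Set.mem_iUnion.mp hwD
        refine Set.mem_iUnion.mpr ⟨⟨max μ ν, max_lt hμ h2⟩, ?_⟩
        have e1 := connectedComponentIn_eq (hmono (le_max_left μ ν) hwμ)
        have e2 := connectedComponentIn_eq (connectedComponentIn_mono z
          (fun u (hu : f u < ν) => (lt_of_lt_of_le hu (le_max_right μ ν) : f u < max μ ν)) hw)
        have e3 : z ∈ connectedComponentIn {u | f u < max μ ν} z :=
          mem_connectedComponentIn (lt_of_lt_of_le h1 (le_max_right μ ν))
        change z ∈ connectedComponentIn {u | f u < max μ ν} y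
        rw [e1]
        exact e2 ▸ e3
    obtain ⟨⟨μ, hμ⟩, hxμ⟩ := Set.mem_iUnion.mp (key hxC)
    exact hbelow μ hμ hxμ
  have hxcl : x ∉ closure (connectedComponentIn {z | f z < m} y) := by
    intro h
    obtain ⟨w, hw, hwD⟩ := mem_closure_iff.mp h _
      ((hopen m).connectedComponentIn (x := x)) (mem_connectedComponentIn hlt)
    apply hxC
    rw [connectedComponentIn_eq hwD, ← connectedComponentIn_eq hw]
    exact mem_connectedComponentIn hlt
  refine ⟨hxcl, ?_, fun h => hxcl (h part1)⟩
  refine isPreconnected_connectedComponentIn.closure.subset_connectedComponentIn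
    (subset_closure (mem_connectedComponentIn hym)) ?_
  refine closure_minimal (fun z hz => ?_) hclosed
  have h1 : f z < m := hsubf hz
  exact h1.le
end

section
/- Let X be a Hausdorff topological space, A ⊆ X a subset, and f : X → ℝ continuous. Let x ∈ X and suppose there is a compact set K ⊆ X with x in the interior of K, K ∩ A = ∅, and f(z) > f(x) for all z ∈ K \ {x} (i.e. x is a strict local minimum of f with a compact neighbourhood avoiding A). Then there exists λ > f(x) such that the connected component of x in {f < λ} is contained in K; in particular the set Λ(x) = {λ > f(x) : the connected component of x in {f < λ} is disjoint from A} is nonempty, so λ(x) = sup Λ(x) is well defined. (This is the claim, made after equation (2.3) of the paper, that under assumption (A0) the quantity λ(x) is well defined for every (nondegenerate, hence strict) local minimum x of f in Ω.) -/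
/-- Around equation (2.3) of the paper: if `x` is a strict local minimum of `f` with a
compact neighbourhood `K` avoiding `A`, then for some `λ > f(x)` the open well of `x` at
level `λ` is contained in `K`; in particular the set `Λ(x)` is nonempty. -/
theorem stmt10 {X : Type*} [TopologicalSpace X] [T2Space X]
    (A : Set X) (f : X → ℝ) (hf : Continuous f) (x : X) (K : Set X)
    (hK : IsCompact K) (hxK : x ∈ interior K) (hKA : K ∩ A = ∅)
    (hmin : ∀ z ∈ K, z ≠ x → f x < f z) :
    (∃ l, f x < l ∧ connectedComponentIn {y | f y < l} x ⊆ K) ∧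
    {l : ℝ | f x < l ∧ connectedComponentIn {y | f y < l} x ∩ A = ∅}.Nonempty := by
  have key : ∃ l, f x < l ∧ ∀ z ∈ K \ interior K, l ≤ f z := by
    have hc : IsCompact (K \ interior K) := hK.diff isOpen_interior
    rcases (K \ interior K).eq_empty_or_nonempty with h | h
    · exact ⟨f x + 1, by linarith, by simp [h]⟩
    · obtain ⟨z, hz, hzm⟩ := hc.exists_isMinOn h hf.continuousOn
      refine ⟨f z, hmin z hz.1 ?_, fun w hw => hzm hw⟩
      rintro rfl
      exact hz.2 hxK
  obtain ⟨l, hl, hlK⟩ := key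
  have hsub : connectedComponentIn {y | f y < l} x ⊆ K := by
    refine Set.Subset.trans (IsPreconnected.subset_left_of_subset_union isOpen_interior
      hK.isClosed.isOpen_compl ?_ ?_ ⟨x, mem_connectedComponentIn hl, hxK⟩
      isPreconnected_connectedComponentIn) interior_subset
    · exact Set.disjoint_left.2 fun y hy hy' => hy' (interior_subset hy)
    · intro y hy
      have h1 : f y < l := connectedComponentIn_subset {y | f y < l} x hy
      by_cases hyK : y ∈ K
      · by_cases hi : y ∈ interior K
        · exact Or.inl hi
        · exact absurd (hlK y ⟨hyK, hi⟩) (not_le.2 h1)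
      · exact Or.inr hyK
  refine ⟨⟨l, hl, hsub⟩, l, hl, ?_⟩
  exact Set.subset_empty_iff.1 (hKA ▸ Set.inter_subset_inter_left A hsub)
end

section
/- Let X be a compact Hausdorff, locally connected, connected topological space, A ⊆ X a nonempty closed subset, and f : X → ℝ continuous. Let U₀ be the set of points of X \ A that are local minima of f, and assume that U₀ is nonempty and that for every x ∈ U₀ the set Λ(x) = {λ > f(x) : the connected component of x in {f < λ} is disjoint from A} is nonempty (it is then automatically bounded above). For x ∈ U₀ put λ(x) = sup Λ(x) and let C(x) be the connected component of x in {f < λ(x)}, and let 𝒞 = {C(x) : x ∈ U₀}. Assume: (A1) there exists x* ∈ U₀ such that for every x ∈ U₀ with C(x) ≠ C(x*), sup_{cl C(x)} f − min_{cl C(x)} f < sup_{cl C(x*)} f − min_{cl C(x*)} f, where cl denotes closure; (A2) cl C(x*) ∩ A ≠ ∅; (A3) every point of cl C(x*) ∩ A minimizes f over A. Then: min_X f < min_A f, the minimum of f over C(x*) equals min_X f, and the set of minimizers of f over C(x*) coincides with the set of global minimizers of f over X. (This is Lemma 3.13 of the paper: under (A1), (A2), (A3) one has argmin_{C₁} f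 = argmin over the whole domain, and the global minimum of f lies strictly below min_{∂Ω} f; here X plays the role of the closure of Ω and A of its boundary ∂Ω.) -/
lemma cl_comp {X : Type*} [TopologicalSpace X] [LocallyConnectedSpace X]
    (f : X → ℝ) (hf : Continuous f) (l : ℝ) (x y : X)
    (hy : y ∈ closure (connectedComponentIn {z | f z < l} x)) (hyl : f y < l) :
    y ∈ connectedComponentIn {z | f z < l} x := by
  have ho : IsOpen {z | f z < l} := isOpen_lt hf continuous_const
  have ho2 : IsOpen (connectedComponentIn {z | f z < l} y) := ho.connectedComponentIn
  have hyy : y ∈ connectedComponentIn {z | f z < l} y := mem_connectedComponentIn hyl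
  obtain ⟨w, hw1, hw2⟩ := mem_closure_iff.1 hy _ ho2 hyy
  rw [connectedComponentIn_eq hw2, ← connectedComponentIn_eq hw1]
  exact hyy

lemma comp_disj {X : Type*} [TopologicalSpace X] [LocallyConnectedSpace X]
    (A : Set X) (f : X → ℝ) (hf : Continuous f) (x : X) (L : Set ℝ)
    (hL : L = {l : ℝ | f x < l ∧ connectedComponentIn {y | f y < l} x ∩ A = ∅})
    (hne : L.Nonempty) :
    connectedComponentIn {y | f y < sSup L} x ∩ A = ∅ := by
  by_cases hx : f x < sSup L
  swap
  · rw [connectedComponentIn_eq_empty (by exact hx), Set.empty_inter]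
  have key : connectedComponentIn {y | f y < sSup L} x ⊆
      ⋃ l ∈ L, connectedComponentIn {y | f y < l} x := by
    apply IsPreconnected.subset_of_closure_inter_subset isPreconnected_connectedComponentIn
    · exact isOpen_biUnion fun l _ => (isOpen_lt hf continuous_const).connectedComponentIn
    · obtain ⟨l, hl⟩ := hne
      refine ⟨x, mem_connectedComponentIn hx, Set.mem_biUnion hl (mem_connectedComponentIn ?_)⟩
      rw [hL] at hl
      exact hl.1
    · rintro y ⟨hy, hyC⟩
      have hyl : f y < sSup L := connectedComponentIn_subset {y | f y < sSup L} _ hyC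
      obtain ⟨l, hl, hyl⟩ := exists_lt_of_lt_csSup hne hyl
      have ho2 : IsOpen (connectedComponentIn {z | f z < l} y) :=
        (isOpen_lt hf continuous_const).connectedComponentIn
      obtain ⟨w, hw1, hw2⟩ := mem_closure_iff.1 hy _ ho2 (mem_connectedComponentIn hyl)
      obtain ⟨l', hl', hw2⟩ := Set.mem_iUnion₂.1 hw2
      have hm : max l l' ∈ L := by
        rcases max_choice l l' with h | h <;> rw [h] <;> assumption
      refine Set.mem_biUnion hm ?_
      have hsl : {z | f z < l} ⊆ {z | f z < max l l'} := fun z (hz : f z < _) => show f z < max l l' from lt_max_of_lt_left hz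
      have hsr : {z | f z < l'} ⊆ {z | f z < max l l'} := fun z (hz : f z < _) => show f z < max l l' from lt_max_of_lt_right hz
      have h1 : w ∈ connectedComponentIn {z | f z < max l l'} y :=
        connectedComponentIn_mono _ (hsl) hw1
      have h2 : w ∈ connectedComponentIn {z | f z < max l l'} x :=
        connectedComponentIn_mono _ (hsr) hw2
      rw [connectedComponentIn_eq h2, ← connectedComponentIn_eq h1]
      exact mem_connectedComponentIn (lt_max_of_lt_left hyl)
  rw [Set.eq_empty_iff_forall_notMem]
  rintro a ⟨ha, haA⟩
  obtain ⟨l, hl, hal⟩ := Set.mem_iUnion₂.1 (key ha)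
  rw [hL] at hl
  exact Set.eq_empty_iff_forall_notMem.1 hl.2 a ⟨hal, haA⟩

/-- Lemma 3.13 of the paper: under assumptions (A1), (A2), (A3), the global minimum of `f`
lies strictly below `min_A f`, the minimum of `f` over the principal well `C(x*)` is the
global minimum, and the minimizers of `f` over `C(x*)` are exactly the global minimizers. -/
theorem stmt11 {X : Type*} [TopologicalSpace X] [CompactSpace X] [T2Space X]
    [LocallyConnectedSpace X] [ConnectedSpace X]
    (A : Set X) (hAne : A.Nonempty) (hAclosed : IsClosed A)
    (f : X → ℝ) (hf : Continuous f)
    (U₀ : Set X) (hU₀ : U₀ = {x | x ∉ A ∧ IsLocalMin f x}) (hU₀ne : U₀.Nonempty)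
    (Λ : X → Set ℝ)
    (hΛ : ∀ x, Λ x = {l : ℝ | f x < l ∧ connectedComponentIn {y | f y < l} x ∩ A = ∅})
    (hΛne : ∀ x ∈ U₀, (Λ x).Nonempty)
    (C : X → Set X) (hC : ∀ x, C x = connectedComponentIn {y | f y < sSup (Λ x)} x)
    (xstar : X) (hxstar : xstar ∈ U₀)
    (hA1 : ∀ x ∈ U₀, C x ≠ C xstar →
      sSup (f '' closure (C x)) - sInf (f '' closure (C x)) <
        sSup (f '' closure (C xstar)) - sInf (f '' closure (C xstar)))
    (hA2 : (closure (C xstar) ∩ A).Nonempty)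
    (hA3 : ∀ z ∈ closure (C xstar) ∩ A, ∀ w ∈ A, f z ≤ f w) :
    sInf (Set.range f) < sInf (f '' A) ∧
    sInf (f '' C xstar) = sInf (Set.range f) ∧
    {y ∈ C xstar | ∀ z ∈ C xstar, f y ≤ f z} = {y | ∀ z, f y ≤ f z} := by
  have hcl : ∀ x, ∀ y ∈ closure (C x), f y < sSup (Λ x) → y ∈ C x := by
    intro x y hy h
    rw [hC] at hy ⊢
    exact cl_comp f hf _ x y hy h
  have hdis : ∀ x ∈ U₀, C x ∩ A = ∅ := by
    intro x hx
    rw [hC]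
    exact comp_disj A f hf x _ (hΛ x) (hΛne x hx)
  have hbdd : ∀ x, BddAbove (Λ x) := by
    intro x
    obtain ⟨M, hM⟩ := (isCompact_range hf).bddAbove
    refine ⟨M, fun l hl => ?_⟩
    by_contra! hlt
    rw [hΛ] at hl
    have hu : {y | f y < l} = Set.univ :=
      Set.eq_univ_of_forall fun y => (hM ⟨y, rfl⟩).trans_lt hlt
    obtain ⟨a, ha⟩ := hAne
    have := hl.2
    rw [hu, connectedComponentIn_univ, PreconnectedSpace.connectedComponent_eq_univ,
      Set.univ_inter] at this
    rw [this] at ha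
    exact ha
  have hlt : ∀ x ∈ U₀, f x < sSup (Λ x) := by
    intro x hx
    obtain ⟨l, hl⟩ := hΛne x hx
    have h1 := le_csSup (hbdd x) hl
    rw [hΛ] at hl
    exact hl.1.trans_le h1
  have hmem : ∀ x ∈ U₀, x ∈ C x := by
    intro x hx
    rw [hC]
    exact mem_connectedComponentIn (hlt x hx)
  have hle : ∀ x, ∀ y ∈ closure (C x), f y ≤ sSup (Λ x) := by
    intro x
    apply closure_minimal (t := {y | f y ≤ sSup (Λ x)})
    · intro y hy
      rw [hC] at hy
      have h := connectedComponentIn_subset {y | f y < sSup (Λ x)} _ hy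
      exact le_of_lt (show f y < sSup (Λ x) from h)
    · exact isClosed_le hf continuous_const
  have hopen : ∀ x, IsOpen (C x) := by
    intro x
    rw [hC]
    exact (isOpen_lt hf continuous_const).connectedComponentIn
  have hsup : ∀ x ∈ U₀, sSup (f '' closure (C x)) = sSup (Λ x) := by
    intro x hx
    have : ∃ y ∈ closure (C x), f y = sSup (Λ x) := by
      by_contra! hcon
      have hclosed : IsClosed (C x) := by
        apply isClosed_of_closure_subset
        intro y hy
        exact hcl x y hy (lt_of_le_of_ne (hle x y hy) (hcon y hy))
      have hu := IsClopen.eq_univ ⟨hclosed, hopen x⟩ ⟨x, hmem x hx⟩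
      have h2 := hdis x hx
      rw [hu, Set.univ_inter] at h2
      exact hAne.ne_empty h2
    obtain ⟨y, hy, hyl⟩ := this
    refine IsGreatest.csSup_eq ⟨⟨y, hy, hyl⟩, ?_⟩
    rintro _ ⟨z, hz, rfl⟩
    exact hle x z hz
  obtain ⟨z, hz, hzA⟩ := hA2
  have hfz : f z = sSup (Λ xstar) := by
    refine le_antisymm (hle _ z hz) ?_
    by_contra! h
    exact Set.eq_empty_iff_forall_notMem.1 (hdis _ hxstar) z ⟨hcl _ z hz h, hzA⟩
  have hminA : sInf (f '' A) = f z := by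
    refine IsLeast.csInf_eq ⟨⟨z, hzA, rfl⟩, ?_⟩
    rintro _ ⟨w, hw, rfl⟩
    exact hA3 z ⟨hz, hzA⟩ w hw
  have hglob : ∀ m, (∀ y, f m ≤ f y) → m ∈ C xstar := by
    intro m hm
    have hmlt : f m < f z := (hm xstar).trans_lt (hfz ▸ hlt _ hxstar)
    have hmU : m ∈ U₀ := by
      rw [hU₀]
      refine ⟨fun hmA => ?_, Filter.Eventually.of_forall hm⟩
      exact absurd (hA3 z ⟨hz, hzA⟩ m hmA) (not_le.2 hmlt)
    have hzΛ : f z ∈ Λ m := by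
      rw [hΛ]
      refine ⟨hmlt, Set.eq_empty_iff_forall_notMem.2 ?_⟩
      rintro a ⟨ha, haA⟩
      have h1 : f a < f z := connectedComponentIn_subset {y | f y < f z} _ ha
      exact absurd (hA3 z ⟨hz, hzA⟩ a haA) (not_le.2 h1)
    have h1 : f z ≤ sSup (Λ m) := le_csSup (hbdd m) hzΛ
    by_contra hcon
    have hne : C m ≠ C xstar := fun h => hcon (h ▸ hmem m hmU)
    have h2 := hA1 m hmU hne
    rw [hsup m hmU, hsup _ hxstar] at h2
    have h3 : sInf (f '' closure (C m)) = f m := by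
      refine IsLeast.csInf_eq ⟨⟨m, subset_closure (hmem m hmU), rfl⟩, ?_⟩
      rintro _ ⟨w, hw, rfl⟩
      exact hm w
    have h4 : f m ≤ sInf (f '' closure (C xstar)) := by
      refine le_csInf ⟨f z, z, hz, rfl⟩ ?_
      rintro _ ⟨w, hw, rfl⟩
      exact hm w
    linarith
  obtain ⟨m, -, hm⟩ := isCompact_univ.exists_isMinOn (⟨xstar, Set.mem_univ _⟩ : (Set.univ : Set X).Nonempty) hf.continuousOn
  have hm : ∀ y, f m ≤ f y := fun y => hm (Set.mem_univ y)
  have hmX : sInf (Set.range f) = f m := by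
    refine IsLeast.csInf_eq ⟨⟨m, rfl⟩, ?_⟩
    rintro _ ⟨w, rfl⟩
    exact hm w
  have hmC := hglob m hm
  refine ⟨?_, ?_, ?_⟩
  · rw [hmX, hminA]
    exact (hm xstar).trans_lt (hfz ▸ hlt _ hxstar)
  · rw [hmX]
    refine IsLeast.csInf_eq ⟨⟨m, hmC, rfl⟩, ?_⟩
    rintro _ ⟨w, _, rfl⟩
    exact hm w
  · ext y
    constructor
    · rintro ⟨_, hy⟩ w
      exact (hy m hmC).trans (hm w)
    · intro hy
      exact ⟨hglob y hy, fun w _ => hy w⟩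
end

section
/- Let d ≥ 1, let f : ℝ^d → ℝ be continuous, and let χ : ℝ^d → ℝ be a continuously differentiable function with compact support. Assume there exist x₀ ∈ ℝ^d and r > 0 with χ ≡ 1 on the closed ball of radius r around x₀, and a real number a > f(x₀) such that f ≥ a on the support of ∇χ. Then for every δ ∈ (0, a − f(x₀)) there exist C > 0 and h₀ > 0 such that for all h ∈ (0, h₀): (∫_{ℝ^d} h² |∇χ(x)|² e^{−2f(x)/h} dx)^{1/2} ≤ C e^{−(a − f(x₀) − δ)/h} (∫_{ℝ^d} χ(x)² e^{−2f(x)/h} dx)^{1/2}. (This is the analytic content of Lemma 3.2 of the paper: with a = f(j(x_{k,ℓ})) − 2ε and x₀ = x_{k,ℓ} it yields the quasi-mode estimate ‖d_{f,h} ṽ_{k,ℓ}‖_{L²} = h‖e^{−f/h}∇χ‖_{L²}/‖e^{−f/h}χ‖_{L²} ≤ C e^{−(f(j(x_{k,ℓ}))−f(x_{k,ℓ})−cε)/h}.) -/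
open MeasureTheory

/-- Lemma 3.2 of the paper (analytic content): the weighted `L²` norm of `h ∇χ` is
exponentially small, of rate `a − f(x₀) − δ`, compared with the weighted `L²` norm of `χ`. -/
theorem stmt12 (d : ℕ) (hd : 1 ≤ d)
    (f : EuclideanSpace ℝ (Fin d) → ℝ) (hf : Continuous f)
    (χ : EuclideanSpace ℝ (Fin d) → ℝ) (hχ : ContDiff ℝ 1 χ)
    (hχc : HasCompactSupport χ)
    (x₀ : EuclideanSpace ℝ (Fin d)) (r : ℝ) (hr : 0 < r)
    (hχ1 : ∀ x ∈ Metric.closedBall x₀ r, χ x = 1)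
    (a : ℝ) (ha : f x₀ < a)
    (hfa : ∀ x ∈ tsupport (gradient χ), a ≤ f x) :
    ∀ δ ∈ Set.Ioo (0 : ℝ) (a - f x₀), ∃ C > 0, ∃ h₀ > 0, ∀ h : ℝ, 0 < h → h < h₀ →
      Real.sqrt (∫ x, h ^ 2 * ‖gradient χ x‖ ^ 2 * Real.exp (-2 * f x / h)) ≤
        C * Real.exp (-(a - f x₀ - δ) / h) *
          Real.sqrt (∫ x, (χ x) ^ 2 * Real.exp (-2 * f x / h)) := by
  intro δ hδ
  obtain ⟨hδ0, hδ1⟩ := hδ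
  have hgc : Continuous (gradient χ) := by
    unfold gradient
    exact (LinearIsometryEquiv.continuous _).comp (hχ.continuous_fderiv (by norm_num))
  have hgs : HasCompactSupport (gradient χ) := by
    have h1 := hχc.fderiv (𝕜 := ℝ)
    exact h1.comp_left (g := (InnerProductSpace.toDual ℝ (EuclideanSpace ℝ (Fin d))).symm)
      (map_zero _)
  have hGint : Integrable (fun x => ‖gradient χ x‖ ^ 2) := by
    apply Continuous.integrable_of_hasCompactSupport (by fun_prop)
    exact hgs.comp_left (g := fun v => ‖v‖ ^ 2) (by simp)
  set G := ∫ x, ‖gradient χ x‖ ^ 2 with hG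
  have hG0 : 0 ≤ G := integral_nonneg (fun x => by positivity)
  obtain ⟨s, hs0, hs⟩ : ∃ s > 0, ∀ x ∈ Metric.ball x₀ s, f x < f x₀ + δ := by
    have : ∀ᶠ x in nhds x₀, f x < f x₀ + δ :=
      hf.continuousAt.eventually_lt continuousAt_const (by linarith)
    obtain ⟨s, h0, h1⟩ := Metric.eventually_nhds_iff_ball.1 this
    exact ⟨s, h0, h1⟩
  set B := Metric.ball x₀ (min s r) with hB
  have hm : 0 < min s r := lt_min hs0 hr
  set V := volume.real B with hV
  have hV0 : 0 < V := by
    apply ENNReal.toReal_pos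
    · exact (Metric.measure_ball_pos volume x₀ hm).ne'
    · exact measure_ball_lt_top.ne
  refine ⟨Real.sqrt (G / V + 1), by positivity, 1, one_pos, fun h hh hh1 => ?_⟩
  have hint : Integrable (fun x => (χ x) ^ 2 * Real.exp (-2 * f x / h)) := by
    have hc := hχ.continuous
    apply Continuous.integrable_of_hasCompactSupport (by fun_prop)
    have : HasCompactSupport (fun x => (χ x) ^ 2) :=
      hχc.comp_left (g := fun v : ℝ => v ^ 2) (by simp)
    exact this.mul_right
  have hup : ∫ x, h ^ 2 * ‖gradient χ x‖ ^ 2 * Real.exp (-2 * f x / h) ≤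
      G * Real.exp (-2 * a / h) := by
    rw [hG, ← integral_mul_const]
    apply integral_mono_of_nonneg (Filter.Eventually.of_forall fun x => by positivity)
      (hGint.mul_const _)
    refine Filter.Eventually.of_forall fun x => ?_
    by_cases hx : gradient χ x = 0
    · simp [hx]
    · have hax := hfa x (subset_tsupport _ hx)
      have h2 : h ^ 2 ≤ 1 := by nlinarith
      have h3 : Real.exp (-2 * f x / h) ≤ Real.exp (-2 * a / h) := by
        apply Real.exp_le_exp.2
        exact div_le_div_of_nonneg_right (by linarith) hh.le
      have h4 : h ^ 2 * ‖gradient χ x‖ ^ 2 ≤ ‖gradient χ x‖ ^ 2 :=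
        mul_le_of_le_one_left (by positivity) h2
      exact mul_le_mul h4 h3 (by positivity) (by positivity)
  have hlow : V * Real.exp (-2 * (f x₀ + δ) / h) ≤
      ∫ x, (χ x) ^ 2 * Real.exp (-2 * f x / h) := by
    have h1 : ∫ x in B, (χ x) ^ 2 * Real.exp (-2 * f x / h) ≤
        ∫ x, (χ x) ^ 2 * Real.exp (-2 * f x / h) :=
      setIntegral_le_integral hint (Filter.Eventually.of_forall fun x => by positivity)
    refine le_trans ?_ h1
    have h2 : ∫ x in B, Real.exp (-2 * (f x₀ + δ) / h) =
        V * Real.exp (-2 * (f x₀ + δ) / h) := by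
      rw [setIntegral_const, smul_eq_mul]
    rw [← h2]
    apply setIntegral_mono_on _ hint.integrableOn measurableSet_ball
    · intro x hx
      have hx1 : χ x = 1 := hχ1 x
        (Metric.ball_subset_closedBall (Metric.ball_subset_ball (min_le_right _ _) hx))
      have hx2 := hs x (Metric.ball_subset_ball (min_le_left _ _) hx)
      rw [hx1, one_pow, one_mul]
      apply Real.exp_le_exp.2
      exact div_le_div_of_nonneg_right (by linarith) hh.le
    · exact integrableOn_const measure_ball_lt_top.ne
  have hE : Real.exp (-(a - f x₀ - δ) / h) =
      Real.sqrt (Real.exp (-2 * (a - f x₀ - δ) / h)) := by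
    rw [← Real.exp_half]
    congr 1
    ring
  rw [hE, ← Real.sqrt_mul (by positivity), ← Real.sqrt_mul (by positivity)]
  apply Real.sqrt_le_sqrt
  refine hup.trans ?_
  have hex : Real.exp (-2 * a / h) = Real.exp (-2 * (a - f x₀ - δ) / h) *
      Real.exp (-2 * (f x₀ + δ) / h) := by
    rw [← Real.exp_add]
    congr 1
    ring
  calc G * Real.exp (-2 * a / h)
      = G / V * Real.exp (-2 * (a - f x₀ - δ) / h) *
        (V * Real.exp (-2 * (f x₀ + δ) / h)) := by
        rw [hex]; field_simp
    _ ≤ (G / V + 1) * Real.exp (-2 * (a - f x₀ - δ) / h) *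
        (V * Real.exp (-2 * (f x₀ + δ) / h)) := by
        gcongr
        linarith
    _ ≤ _ := by
        apply mul_le_mul_of_nonneg_left hlow
        positivity
end

section
/- Let N ≥ 1 and m be natural numbers, let A be a real m × N matrix, and let δ > 0, M > 0 be constants such that |A_{i j}| ≤ M for all entries. Assume that for every column index k ∈ {1,…,N} there exists a row index i ∈ {1,…,m} such that |A_{i k}| ≥ δ and A_{i j} = 0 for all j > k (i.e. the last nonzero entry of row i sits in column k and has magnitude at least δ). Then there exists β > 0, depending only on N, M and δ, such that ‖A y‖₂ ≥ β ‖y‖₂ for every y ∈ ℝ^N, where ‖·‖₂ denotes the Euclidean norm. (This is the inductive coercivity argument, equation (eq.T) in Step 2 of the proof of Lemma 3.10 of the paper, establishing uniform injectivity of the interaction matrix between quasi-modes.) -/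
/-- Inductive coercivity argument (equation (eq.T) in Step 2 of the proof of Lemma 3.10):
a bounded matrix whose every column dominates a row whose later entries vanish is
uniformly injective, with a constant depending only on `N`, `M`, `δ`. -/
theorem stmt13 (N : ℕ) (hN : 1 ≤ N) (M δ : ℝ) (hM : 0 < M) (hδ : 0 < δ) :
    ∃ β > 0, ∀ (m : ℕ) (A : Matrix (Fin m) (Fin N) ℝ),
      (∀ i j, |A i j| ≤ M) →
      (∀ k : Fin N, ∃ i : Fin m, δ ≤ |A i k| ∧ ∀ j : Fin N, k < j → A i j = 0) →
      ∀ y : Fin N → ℝ,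
        β * Real.sqrt (∑ j, (y j) ^ 2) ≤ Real.sqrt (∑ i, (A.mulVec y i) ^ 2) := by
  set q : ℝ := 1 + M / δ with hq
  have hq1 : 1 ≤ q := by have : 0 < M / δ := by positivity
                         linarith
  have hqN : 0 < q ^ N := by positivity
  refine ⟨M / q ^ N, by positivity, ?_⟩
  intro m A hA hrow y
  set S := Real.sqrt (∑ i, (A.mulVec y i) ^ 2) with hS
  have hS0 : 0 ≤ S := Real.sqrt_nonneg _
  have hi : ∀ i, |A.mulVec y i| ≤ S := by
    intro i
    apply Real.abs_le_sqrt
    exact Finset.single_le_sum (f := fun i => (A.mulVec y i) ^ 2)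
      (fun _ _ => sq_nonneg _) (Finset.mem_univ i)
  have split : ∀ (f : Fin N → ℝ) (k : ℕ) (hk : k < N),
      ∑ j with j.val < k + 1, f j = f ⟨k, hk⟩ + ∑ j with j.val < k, f j := by
    intro f k hk
    have : (Finset.univ.filter fun j : Fin N => j.val < k + 1)
        = insert ⟨k, hk⟩ (Finset.univ.filter fun j : Fin N => j.val < k) := by
      ext j
      simp [Fin.ext_iff]
      omega
    rw [this, Finset.sum_insert (by simp)]
  have key : ∀ k : ℕ, k ≤ N → ∑ j with j.val < k, |y j| ≤ (q ^ k - 1) / M * S := by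
    intro k
    induction k with
    | zero => intro _; simp
    | succ k ih =>
      intro hk
      have ih := ih (by omega)
      obtain ⟨i, h1, h2⟩ := hrow ⟨k, hk⟩
      rw [split _ k hk]
      set T := ∑ j with j.val < k, |y j| with hT
      have e : A.mulVec y i = A i ⟨k, hk⟩ * y ⟨k, hk⟩ + ∑ j with j.val < k, A i j * y j := by
        rw [← split (fun j => A i j * y j) k hk]
        rw [Finset.sum_filter_of_ne]
        · rfl
        · intro j _ hj
          by_contra hlt
          apply hj
          rw [h2 j (by rw [Fin.lt_def]; simp only; omega), zero_mul]
      have e2 : |∑ j with j.val < k, A i j * y j| ≤ M * T := by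
        refine (Finset.abs_sum_le_sum_abs _ _).trans ?_
        rw [hT, Finset.mul_sum]
        apply Finset.sum_le_sum
        intro j _
        rw [abs_mul]
        exact mul_le_mul_of_nonneg_right (hA i j) (abs_nonneg _)
      have e3 : δ * |y ⟨k, hk⟩| ≤ S + M * T := by
        calc δ * |y ⟨k, hk⟩| ≤ |A i ⟨k, hk⟩| * |y ⟨k, hk⟩| :=
              mul_le_mul_of_nonneg_right h1 (abs_nonneg _)
          _ = |A.mulVec y i - ∑ j with j.val < k, A i j * y j| := by
              rw [← abs_mul, e]; congr 1; ring
          _ ≤ |A.mulVec y i| + |∑ j with j.val < k, A i j * y j| := abs_sub _ _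
          _ ≤ S + M * T := add_le_add (hi i) e2
      have e4 : |y ⟨k, hk⟩| ≤ (S + M * T) / δ := by
        rw [le_div_iff₀ hδ]; linarith
      have e5 : q * T ≤ q * ((q ^ k - 1) / M * S) :=
        mul_le_mul_of_nonneg_left ih (by linarith)
      have e6 : (S + M * T) / δ + T = q * T + S / δ := by
        rw [hq]; field_simp; ring
      have e7 : q * ((q ^ k - 1) / M * S) + S / δ = (q ^ (k + 1) - 1) / M * S := by
        have : S / δ = (q - 1) / M * S := by rw [hq]; field_simp; ring
        rw [this, pow_succ]; ring
      linarith
  have hN' := key N le_rfl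
  have hf : (Finset.univ.filter fun j : Fin N => j.val < N) = Finset.univ := by
    ext j; simp
  rw [hf] at hN'
  have h1 : Real.sqrt (∑ j, (y j) ^ 2) ≤ ∑ j, |y j| := by
    rw [Real.sqrt_le_left (Finset.sum_nonneg fun _ _ => abs_nonneg _)]
    have := Finset.sum_sq_le_sq_sum_of_nonneg (s := Finset.univ) (f := fun j => |y j|)
      (fun _ _ => abs_nonneg _)
    simpa using this
  have h2 : (q ^ N - 1) / M * S ≤ q ^ N / M * S := by
    gcongr; linarith
  calc M / q ^ N * Real.sqrt (∑ j, (y j) ^ 2) ≤ M / q ^ N * (q ^ N / M * S) := by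
        gcongr; linarith
    _ = S := by field_simp
end

section
/- Let z₁ < z₂ and let f : [z₁, z₂] → ℝ be a C^∞ function whose derivative vanishes exactly at three points x₁ < z < x₂ of (z₁, z₂), with f(x₁) = f(x₂) < f(z₁) = f(z₂) < f(z). Then for every x ∈ (z₁, z) there exists c > 0 such that, as h → 0⁺, (∫_{z₁}^{x} e^{2f(t)/h} dt) / (∫_{z₁}^{z₂} e^{2f(t)/h} dt) = O(e^{−c/h}); equivalently (∫_{x}^{z₂} e^{2f(t)/h} dt) / (∫_{z₁}^{z₂} e^{2f(t)/h} dt) = 1 + O(e^{−c/h}). (By the explicit one-dimensional exit law (formula (exp) of Appendix B), this is the claim (1.13) of the paper: for the symmetric double-well potential, starting from x ∈ (z₁, z), the process exits through z₁ with probability 1 + O(e^{−c/h}).) -/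
open MeasureTheory

/-- Claim (1.13) of the paper via the explicit one-dimensional exit law: for the symmetric
double-well potential, starting from `x ∈ (z₁, z)`, the relative weight of `(z₁, x)` is
exponentially small when `h → 0`. -/
theorem stmt15 (z₁ z₂ x₁ z x₂ : ℝ) (hz : z₁ < z₂)
    (f : ℝ → ℝ) (hf : ContDiffOn ℝ (⊤ : ℕ∞) f (Set.Icc z₁ z₂))
    (h₁ : z₁ < x₁) (h₂ : x₁ < z) (h₃ : z < x₂) (h₄ : x₂ < z₂)
    (hcrit : {t ∈ Set.Icc z₁ z₂ | derivWithin f (Set.Icc z₁ z₂) t = 0} = {x₁, z, x₂})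
    (hv1 : f x₁ = f x₂) (hv2 : f z₁ = f z₂) (hv3 : f x₁ < f z₁) (hv4 : f z₁ < f z) :
    ∀ x ∈ Set.Ioo z₁ z, ∃ c > 0, ∃ C > 0, ∃ h₀ > 0, ∀ h : ℝ, 0 < h → h < h₀ →
      |(∫ t in z₁..x, Real.exp (2 * f t / h)) /
          (∫ t in z₁..z₂, Real.exp (2 * f t / h))| ≤ C * Real.exp (-c / h) ∧
      |(∫ t in x..z₂, Real.exp (2 * f t / h)) /
          (∫ t in z₁..z₂, Real.exp (2 * f t / h)) - 1| ≤ C * Real.exp (-c / h) := by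
  intro x hx
  obtain ⟨hx1, hx2⟩ := hx
  have hc : ContinuousOn f (Set.Icc z₁ z₂) := hf.continuousOn
  have hzz : z < z₂ := h₃.trans h₄
  obtain ⟨m, hm, hmax⟩ := isCompact_Icc.exists_isMaxOn (Set.nonempty_Icc.2 hx1.le)
    (hc.mono (Set.Icc_subset_Icc_right (hx2.trans hzz).le))
  have key : f m < f z := by
    by_contra hcon
    push Not at hcon
    obtain ⟨p, hp, hpmax⟩ := isCompact_Icc.exists_isMaxOn
      (Set.nonempty_Icc.2 (h₁.trans h₂).le) (hc.mono (Set.Icc_subset_Icc_right hzz.le))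
    have hq : ∃ q, z₁ ≤ q ∧ q < z ∧ ∀ t ∈ Set.Icc z₁ z, f t ≤ f q := by
      rcases hp.2.lt_or_eq with h | h
      · exact ⟨p, hp.1, h, fun t ht => hpmax ht⟩
      · refine ⟨m, hm.1, lt_of_le_of_lt hm.2 hx2, fun t ht => ?_⟩
        have h5 : f t ≤ f p := hpmax ht
        rw [h] at h5
        exact h5.trans hcon
    obtain ⟨q, hq1, hq2, hq3⟩ := hq
    have hqz : f z ≤ f q := hq3 z ⟨(h₁.trans h₂).le, le_rfl⟩
    have hq1' : z₁ < q := by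
      rcases hq1.lt_or_eq with h | h
      · exact h
      · rw [← h] at hqz; linarith
    have hloc : IsLocalMax f q := by
      filter_upwards [Icc_mem_nhds hq1' hq2] with t ht using hq3 t ht
    have hd : derivWithin f (Set.Icc z₁ z₂) q = 0 := by
      rw [derivWithin_of_mem_nhds (Icc_mem_nhds hq1' (hq2.trans hzz))]
      exact hloc.deriv_eq_zero
    have hmem : q ∈ ({x₁, z, x₂} : Set ℝ) := by
      rw [← hcrit]
      exact ⟨⟨hq1, (hq2.trans hzz).le⟩, hd⟩
    rcases hmem with h | h | h
    · rw [h] at hqz; linarith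
    · linarith
    · have : q = x₂ := h
      linarith
  have hzm : z ∈ Set.Ioo z₁ z₂ := ⟨h₁.trans h₂, hzz⟩
  have hcz : ContinuousAt f z := hc.continuousAt (Icc_mem_nhds hzm.1 hzm.2)
  have hev : ∀ᶠ t in nhds z, (f m + f z) / 2 < f t :=
    hcz.eventually (lt_mem_nhds (by linarith))
  obtain ⟨ε, hε, hball⟩ := Metric.eventually_nhds_iff.1 hev
  obtain ⟨y, hy1, hy2⟩ : ∃ y, z < y ∧ y < min z₂ (z + ε) :=
    exists_between (lt_min hzz (by linarith))
  have hyz : y < z₂ := hy2.trans_le (min_le_left _ _)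
  have hye : y < z + ε := hy2.trans_le (min_le_right _ _)
  refine ⟨f z - f m, by linarith, (x - z₁) / (y - z), div_pos (by linarith) (by linarith),
    1, one_pos, fun h hh _ => ?_⟩
  have hcont : ContinuousOn (fun t => Real.exp (2 * f t / h)) (Set.Icc z₁ z₂) :=
    Real.continuous_exp.comp_continuousOn ((continuousOn_const.mul hc).div_const h)
  have hint : ∀ a b, z₁ ≤ a → a ≤ b → b ≤ z₂ →
      IntervalIntegrable (fun t => Real.exp (2 * f t / h)) volume a b := by
    intro a b ha hab hb
    apply ContinuousOn.intervalIntegrable_of_Icc hab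
    exact hcont.mono (Set.Icc_subset_Icc ha hb)
  have hnum : (∫ t in z₁..x, Real.exp (2 * f t / h)) ≤ (x - z₁) * Real.exp (2 * f m / h) := by
    have := intervalIntegral.integral_mono_on hx1.le (hint z₁ x le_rfl hx1.le (by linarith))
      (intervalIntegrable_const (c := Real.exp (2 * f m / h))) (fun t ht => by
        have h6 : f t ≤ f m := hmax ht
        gcongr)
    simpa using this
  have hnum0 : 0 ≤ ∫ t in z₁..x, Real.exp (2 * f t / h) :=
    intervalIntegral.integral_nonneg hx1.le (fun t _ => (Real.exp_pos _).le)
  have hsub : (y - z) * Real.exp ((f m + f z) / h) ≤ ∫ t in z..y, Real.exp (2 * f t / h) := by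
    have := intervalIntegral.integral_mono_on hy1.le
      (intervalIntegrable_const (c := Real.exp ((f m + f z) / h)))
      (hint z y hzm.1.le hy1.le hyz.le) (fun t ht => by
        have h6 : (f m + f z) / 2 < f t := hball (by
          rw [Real.dist_eq, abs_of_nonneg (by linarith [ht.1])]
          linarith [ht.2])
        have h7 : f m + f z ≤ 2 * f t := by linarith
        gcongr)
    simpa using this
  have hnn : ∀ a b, a ≤ b → 0 ≤ ∫ t in a..b, Real.exp (2 * f t / h) := fun a b hab =>
    intervalIntegral.integral_nonneg hab (fun t _ => (Real.exp_pos _).le)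
  have hs1 := intervalIntegral.integral_add_adjacent_intervals
    (hint z₁ z le_rfl hzm.1.le hzz.le) (hint z z₂ hzm.1.le hzz.le le_rfl)
  have hs2 := intervalIntegral.integral_add_adjacent_intervals
    (hint z y hzm.1.le hy1.le hyz.le) (hint y z₂ (by linarith) hyz.le le_rfl)
  have hs3 := intervalIntegral.integral_add_adjacent_intervals
    (hint z₁ x le_rfl hx1.le (by linarith)) (hint x z₂ hx1.le (by linarith) le_rfl)
  have hn1 := hnn z₁ z hzm.1.le
  have hn2 := hnn y z₂ hyz.le
  have hden : (y - z) * Real.exp ((f m + f z) / h) ≤ ∫ t in z₁..z₂, Real.exp (2 * f t / h) := by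
    linarith
  have hyz0 : 0 < y - z := by linarith
  have hpos : 0 < (y - z) * Real.exp ((f m + f z) / h) := mul_pos hyz0 (Real.exp_pos _)
  have hD := hpos.trans_le hden
  have hmain : |(∫ t in z₁..x, Real.exp (2 * f t / h)) /
      (∫ t in z₁..z₂, Real.exp (2 * f t / h))| ≤
      (x - z₁) / (y - z) * Real.exp (-(f z - f m) / h) := by
    rw [abs_of_nonneg (div_nonneg hnum0 hD.le)]
    calc _ ≤ ((x - z₁) * Real.exp (2 * f m / h)) / ((y - z) * Real.exp ((f m + f z) / h)) :=
          div_le_div₀ (mul_nonneg (by linarith) (Real.exp_pos _).le) hnum hpos hden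
      _ = _ := by
          rw [mul_div_mul_comm, ← Real.exp_sub]
          congr 2
          ring
  refine ⟨hmain, ?_⟩
  have heq : (∫ t in x..z₂, Real.exp (2 * f t / h)) /
      (∫ t in z₁..z₂, Real.exp (2 * f t / h)) - 1 = -((∫ t in z₁..x, Real.exp (2 * f t / h)) /
      (∫ t in z₁..z₂, Real.exp (2 * f t / h))) := by
    rw [← hs3] at hD ⊢
    field_simp
    ring
  rw [heq, abs_neg]
  exact hmain
end

section
/- Let z₁ < z₂ and let f : [z₁, z₂] → ℝ be a C^∞ function whose derivative vanishes exactly at three points x₁ < z < x₂ of (z₁, z₂), with f(x₁) < f(x₂) < f(z) and f(z) = f(z₁) = f(z₂), and such that f''(z) < 0, f'(z₁) < 0 and f'(z₂) > 0. Then for every x ∈ (z₁, z), as h → 0⁺, (∫_{z₁}^{x} e^{2f(t)/h} dt) / (∫_{z₁}^{z₂} e^{2f(t)/h} dt) = (√(|f''(z)|) / (2 |f'(z₁)| √π)) · √h + O(h). (By the explicit one-dimensional exit law (formula (exp) of Appendix B) this is assertion (1.17) of Section 1.4.5 of the paper: when assumption (A4) fails, the probability of exiting through z₂ starting from x ∈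 C_max = (z₁, z) is exactly of order √h, not exponentially small.) -/
open MeasureTheory

lemma aux_taylor (A B : ℝ) (f : ℝ → ℝ) (hf : ContDiffOn ℝ (⊤ : ℕ∞) f (Set.Icc A B))
    (p : ℝ) (hp : p ∈ Set.Icc A B) :
    ∃ K > 0, ∃ ε > 0, ∀ t ∈ Set.Icc A B, |t - p| < ε →
      |f t - f p - derivWithin f (Set.Icc A B) p * (t - p)
        - derivWithin (derivWithin f (Set.Icc A B)) (Set.Icc A B) p / 2 * (t - p) ^ 2|
        ≤ K * |t - p| ^ 3 := by
  have h := taylor_isLittleO (n := 3) (convex_Icc A B) hp (contDiffOn_infty.1 hf 3)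
  have h1 := h.bound (c := 1) one_pos
  rw [Filter.Eventually, Metric.mem_nhdsWithin_iff] at h1
  obtain ⟨ε, hε, h1⟩ := h1
  set d3 := iteratedDerivWithin 3 f (Set.Icc A B) p with hd3
  refine ⟨1 + |d3|, by positivity, ε, hε, ?_⟩
  intro t ht hte
  have h2 := h1 ⟨by simpa [Real.dist_eq] using hte, ht⟩
  have e2 : iteratedDerivWithin 2 f (Set.Icc A B) p =
      derivWithin (derivWithin f (Set.Icc A B)) (Set.Icc A B) p := by
    rw [iteratedDerivWithin_succ, iteratedDerivWithin_one]
  rw [Set.mem_ofPred_eq] at h2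
  rw [taylorWithinEval_succ, taylorWithinEval_succ, taylorWithinEval_succ,
    taylor_within_zero_eval] at h2
  norm_num at h2
  rw [e2, ← hd3] at h2
  have h3 : |1 / 6 * (t - p) ^ 3 * d3| ≤ |d3| * |t - p| ^ 3 := by
    rw [abs_mul, abs_mul, abs_pow]
    norm_num
    have : 0 ≤ |d3| * |t - p| ^ 3 := by positivity
    nlinarith
  rw [abs_le] at *
  norm_num [Nat.factorial] at h2
  constructor <;> nlinarith [h2.1, h2.2, h3.1, h3.2]

lemma aux_bounds (k : ℕ) (L a K ε : ℝ) (hL : 0 < L) (ha : 0 < a) (hK : 0 < K) (hε : 0 < ε)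
    (g : ℝ → ℝ) (hg : ContinuousOn g (Set.Icc 0 L)) (hneg : ∀ s ∈ Set.Ioc 0 L, g s < 0)
    (hloc : ∀ s ∈ Set.Icc 0 L, s < ε → |g s + a * s ^ k| ≤ K * s ^ (k + 1)) :
    ∃ c > 0, c ≤ a ∧ ∃ K' > 0, ∀ s ∈ Set.Ioc 0 L, g s ≤ - c * s ^ k ∧
      |g s + a * s ^ k| ≤ K' * s ^ (k + 1) := by
  set δ := min (min (ε / 2) L) (a / (2 * K)) with hδ
  have hδ0 : 0 < δ := by positivity
  have hδε : δ < ε := lt_of_le_of_lt ((min_le_left _ _).trans (min_le_left _ _)) (by linarith)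
  have hδL : δ ≤ L := (min_le_left _ _).trans (min_le_right _ _)
  have hδa : δ * K ≤ a / 2 := by
    have : δ ≤ a / (2 * K) := min_le_right _ _
    rw [le_div_iff₀ (by positivity)] at this
    linarith
  have hsub : Set.Icc δ L ⊆ Set.Icc 0 L := Set.Icc_subset_Icc_left hδ0.le
  obtain ⟨q, hq, hqm⟩ := isCompact_Icc.exists_isMaxOn (Set.nonempty_Icc.2 hδL) (hg.mono hsub)
  have hq0 : g q < 0 := hneg q ⟨hδ0.trans_le hq.1, hq.2⟩
  obtain ⟨B, hB⟩ := isCompact_Icc.exists_bound_of_continuousOn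
    (f := fun s => g s + a * s ^ k) (hg.add (by fun_prop))
  refine ⟨min (a / 2) (- g q / L ^ k), lt_min (by positivity) (div_pos (by linarith) (by positivity)),
    (min_le_left _ _).trans (by linarith), K + |B| / δ ^ (k + 1), by positivity, ?_⟩
  intro s hs
  have hs0 : 0 < s := hs.1
  have hsk : 0 < s ^ k := by positivity
  have hsk1 : 0 < s ^ (k + 1) := by positivity
  by_cases hsd : s ≤ δ
  · have h1 := hloc s ⟨hs0.le, hs.2⟩ (hsd.trans_lt hδε)
    have hm : min (a / 2) (- g q / L ^ k) ≤ a / 2 := min_le_left _ _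
    constructor
    · have h2 := (abs_le.1 h1).2
      have h3 : K * s ^ (k + 1) ≤ a / 2 * s ^ k := by
        rw [pow_succ]
        have : K * s ≤ a / 2 := by nlinarith
        nlinarith
      nlinarith
    · have : 0 ≤ |B| / δ ^ (k + 1) * s ^ (k + 1) := by positivity
      linarith
  · push Not at hsd
    have hm : min (a / 2) (- g q / L ^ k) ≤ - g q / L ^ k := min_le_right _ _
    constructor
    · have h1 : g s ≤ g q := hqm ⟨hsd.le, hs.2⟩
      have h2 : s ^ k ≤ L ^ k := pow_le_pow_left₀ hs0.le hs.2 k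
      have h3 : - g q / L ^ k * s ^ k ≤ - g q := by
        rw [div_mul_eq_mul_div, div_le_iff₀ (by positivity)]
        nlinarith
      nlinarith
    · have h1 := hB s ⟨hs0.le, hs.2⟩
      rw [Real.norm_eq_abs] at h1
      have h2 : δ ^ (k + 1) ≤ s ^ (k + 1) := pow_le_pow_left₀ hδ0.le hsd.le _
      have h3 : |B| ≤ |B| / δ ^ (k + 1) * s ^ (k + 1) := by
        rw [div_mul_eq_mul_div, le_div_iff₀ (by positivity)]
        exact mul_le_mul_of_nonneg_left h2 (abs_nonneg _)
      have := le_abs_self B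
      nlinarith

lemma aux_exp (u v w : ℝ) (hu : u ≤ w) (hv : v ≤ w) :
    |Real.exp u - Real.exp v| ≤ |u - v| * Real.exp w := by
  wlog h : v ≤ u generalizing u v
  · rw [abs_sub_comm, abs_sub_comm u v]
    exact this v u hv hu (by linarith)
  rw [abs_of_nonneg (by linarith [Real.exp_le_exp.2 h]), abs_of_nonneg (by linarith)]
  have h1 : Real.exp v = Real.exp u * Real.exp (v - u) := by rw [← Real.exp_add]; ring_nf
  have h2 := Real.add_one_le_exp (v - u)
  have h3 := Real.exp_le_exp.2 hu
  have h4 := Real.exp_pos u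
  rw [h1]
  nlinarith

lemma aux_laplace (k : ℕ) (hk : 0 < k) (L a K ε : ℝ) (hL : 0 < L) (ha : 0 < a) (hK : 0 < K)
    (hε : 0 < ε)
    (g : ℝ → ℝ) (hg : ContinuousOn g (Set.Icc 0 L)) (hneg : ∀ s ∈ Set.Ioc 0 L, g s < 0)
    (hloc : ∀ s ∈ Set.Icc 0 L, s < ε → |g s + a * s ^ k| ≤ K * s ^ (k + 1)) :
    ∃ C > 0, ∀ h : ℝ, 0 < h → h < 1 →
      |(∫ s in (0:ℝ)..L, Real.exp (2 * g s / h))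
        - ∫ s in Set.Ioi (0:ℝ), Real.exp (-(2 * a / h) * s ^ k)| ≤ C * h ^ (2 / (k:ℝ)) := by
  obtain ⟨c, hc, hca, K', hK', hb⟩ := aux_bounds k L a K ε hL ha hK hε g hg hneg hloc
  have hkR : (0:ℝ) < k := by exact_mod_cast hk
  set M := 2 * K' + 1 / L ^ (k + 1) with hM
  have hM0 : 0 < M := by positivity
  refine ⟨M * ((2 * c) ^ (-((k + 1 : ℝ) + 1) / k) * (1 / k) * Real.Gamma (((k + 1 : ℝ) + 1) / k)), ?_, ?_⟩
  · have : 0 < Real.Gamma (((k + 1 : ℝ) + 1) / k) := Real.Gamma_pos_of_pos (by positivity)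
    positivity
  intro h hh hh1
  have hint : IntegrableOn (fun s : ℝ => M / h * (s ^ (k + 1) * Real.exp (-(2 * c / h) * s ^ k)))
      (Set.Ioi 0) := by
    have := integrableOn_rpow_mul_exp_neg_mul_rpow (s := (k + 1 : ℝ)) (p := k) (b := 2 * c / h)
      (by linarith) hkR (by positivity)
    refine (IntegrableOn.congr_fun this ?_ measurableSet_Ioi).const_mul _
    intro s hs
    have e : s ^ (k + 1 : ℝ) = s ^ (k + 1) := by exact_mod_cast Real.rpow_natCast s (k + 1)
    simp only [e, Real.rpow_natCast]
  have hval : ∫ s in Set.Ioi (0:ℝ), M / h * (s ^ (k + 1) * Real.exp (-(2 * c / h) * s ^ k))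
      = M * ((2 * c) ^ (-((k + 1 : ℝ) + 1) / k) * (1 / k) * Real.Gamma (((k + 1 : ℝ) + 1) / k))
        * h ^ (2 / (k:ℝ)) := by
    have := integral_rpow_mul_exp_neg_mul_rpow (q := (k + 1 : ℝ)) (p := k) (b := 2 * c / h)
      hkR (by linarith) (by positivity)
    rw [integral_const_mul]
    have e : ∀ s : ℝ, s ^ (k + 1 : ℝ) = s ^ (k + 1) := fun s => by
      exact_mod_cast Real.rpow_natCast s (k + 1)
    simp only [e, Real.rpow_natCast] at this
    rw [this, Real.div_rpow (by positivity) hh.le]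
    have e3 : h ^ (2 / (k:ℝ)) = h⁻¹ * (h ^ (-((k + 1 : ℝ) + 1) / k))⁻¹ := by
      rw [← Real.rpow_neg hh.le, ← Real.rpow_neg_one, ← Real.rpow_add hh]
      congr 1
      field_simp
      ring
    rw [e3]
    ring
  have hgauss : IntegrableOn (fun s : ℝ => Real.exp (-(2 * a / h) * s ^ k)) (Set.Ioi 0) := by
    have := integrableOn_rpow_mul_exp_neg_mul_rpow (s := (0 : ℝ)) (p := k) (b := 2 * a / h)
      (by linarith) hkR (by positivity)
    simpa using this
  have hF : IntegrableOn (fun s : ℝ => Real.exp (2 * g s / h)) (Set.Ioc 0 L) := by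
    refine (ContinuousOn.integrableOn_Icc ?_).mono_set Set.Ioc_subset_Icc_self
    fun_prop
  have hF2 : IntegrableOn ((Set.Ioc 0 L).indicator (fun s : ℝ => Real.exp (2 * g s / h)))
      (Set.Ioi 0) := ((integrable_indicator_iff measurableSet_Ioc).2 hF).integrableOn
  have hI : ∫ s in (0:ℝ)..L, Real.exp (2 * g s / h) = ∫ s in Set.Ioi (0:ℝ),
      (Set.Ioc 0 L).indicator (fun s : ℝ => Real.exp (2 * g s / h)) s := by
    rw [intervalIntegral.integral_of_le hL.le, setIntegral_indicator measurableSet_Ioc]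
    congr 2
    ext s; simp
  rw [hI, ← integral_sub hF2 hgauss, ← hval, ← Real.norm_eq_abs]
  refine norm_integral_le_of_norm_le hint ?_
  refine (ae_restrict_iff' measurableSet_Ioi).2 (Filter.Eventually.of_forall ?_)
  intro s hs
  have hs0 : 0 < s := hs
  have hsk : 0 < s ^ k := by positivity
  have hsk1 : 0 < s ^ (k + 1) := by positivity
  have hle : -(2 * a / h) * s ^ k ≤ -(2 * c / h) * s ^ k := by
    have : 2 * c / h ≤ 2 * a / h := by gcongr
    nlinarith
  rw [Real.norm_eq_abs]
  by_cases hsL : s ≤ L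
  · rw [Set.indicator_of_mem (show s ∈ Set.Ioc 0 L from ⟨hs0, hsL⟩)]
    obtain ⟨b1, b2⟩ := hb s ⟨hs0, hsL⟩
    have h1 : 2 * g s / h ≤ -(2 * c / h) * s ^ k := by
      rw [div_le_iff₀ hh]
      have : -(2 * c / h) * s ^ k * h = 2 * (-c * s ^ k) := by field_simp
      rw [this]; linarith
    refine (aux_exp _ _ _ h1 hle).trans ?_
    rw [← mul_assoc]
    refine mul_le_mul_of_nonneg_right ?_ (Real.exp_pos _).le
    have : 2 * g s / h - -(2 * a / h) * s ^ k = 2 / h * (g s + a * s ^ k) := by field_simp; ring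
    rw [this, abs_mul, abs_of_pos (by positivity : 0 < 2 / h)]
    calc 2 / h * |g s + a * s ^ k| ≤ 2 / h * (K' * s ^ (k + 1)) := by gcongr
      _ = (2 * K') / h * s ^ (k + 1) := by ring
      _ ≤ M / h * s ^ (k + 1) := by
        gcongr
        rw [hM]
        have : 0 < 1 / L ^ (k + 1) := by positivity
        linarith
  · rw [Set.indicator_of_notMem (by simp [hsL])]
    push Not at hsL
    rw [zero_sub, abs_neg, abs_of_pos (Real.exp_pos _), ← mul_assoc]
    refine (Real.exp_le_exp.2 hle).trans ?_
    refine le_mul_of_one_le_left (Real.exp_pos _).le ?_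
    have h2 : L ^ (k + 1) ≤ s ^ (k + 1) := pow_le_pow_left₀ hL.le hsL.le _
    calc (1:ℝ) ≤ 1 / L ^ (k + 1) * s ^ (k + 1) := by
          rw [div_mul_eq_mul_div, one_mul, le_div_iff₀ (by positivity)]; linarith
      _ ≤ M / h * s ^ (k + 1) := by
        refine mul_le_mul_of_nonneg_right ?_ hsk1.le
        rw [le_div_iff₀ hh]
        have : 0 < 1 / L ^ (k + 1) := by positivity
        nlinarith

lemma aux_side1 (A B : ℝ) (f : ℝ → ℝ) (hf : ContDiffOn ℝ (⊤ : ℕ∞) f (Set.Icc A B))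
    (p σ L : ℝ) (hp : p ∈ Set.Icc A B) (hσ : |σ| = 1) (hL : 0 < L)
    (hmem : ∀ s ∈ Set.Icc 0 L, p + σ * s ∈ Set.Icc A B)
    (hneg : ∀ s ∈ Set.Ioc 0 L, f (p + σ * s) < f p)
    (ha : σ * derivWithin f (Set.Icc A B) p < 0) :
    ∃ C > 0, ∀ h : ℝ, 0 < h → h < 1 →
      |(∫ s in (0:ℝ)..L, Real.exp (2 * (f (p + σ * s) - f p) / h))
        - h / (2 * |derivWithin f (Set.Icc A B) p|)| ≤ C * h ^ 2 := by
  obtain ⟨K, hK, ε, hε, hT⟩ := aux_taylor A B f hf p hp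
  set d1 := derivWithin f (Set.Icc A B) p with hd1
  set d2 := derivWithin (derivWithin f (Set.Icc A B)) (Set.Icc A B) p with hd2
  have hσ2 : σ ^ 2 = 1 := by rw [← sq_abs, hσ]; norm_num
  have habs : |d1| = - (σ * d1) := by
    rw [← abs_of_neg ha, abs_mul, hσ, one_mul]
  have hloc : ∀ s ∈ Set.Icc 0 L, s < min ε 1 →
      |f (p + σ * s) - f p + -(σ * d1) * s ^ 1| ≤ (K + |d2| / 2) * s ^ (1 + 1) := by
    intro s hs hse
    have h0 := hs.1
    have h1 := hT _ (hmem s hs) (by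
      rw [add_sub_cancel_left, abs_mul, hσ, one_mul, abs_of_nonneg h0]
      exact hse.trans_le (min_le_left _ _))
    have hs1 : s < 1 := hse.trans_le (min_le_right _ _)
    rw [add_sub_cancel_left, abs_mul, hσ, one_mul, abs_of_nonneg h0, mul_pow, hσ2, one_mul] at h1
    have h3 : s ^ 3 ≤ s ^ 2 := by nlinarith [sq_nonneg s]
    have h4 : |d2 / 2 * s ^ 2| = |d2| / 2 * s ^ 2 := by
      rw [abs_mul, abs_div, abs_of_nonneg (sq_nonneg s), abs_two]
    have e : f (p + σ * s) - f p + -(σ * d1) * s ^ 1 =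
      (f (p + σ * s) - f p - d1 * (σ * s) - d2 / 2 * s ^ 2) + d2 / 2 * s ^ 2 := by ring
    rw [e]
    refine (abs_add_le _ _).trans ?_
    rw [h4]
    norm_num
    nlinarith
  obtain ⟨C, hC, H⟩ := aux_laplace 1 one_pos L (-(σ * d1)) (K + |d2| / 2) (min ε 1) hL (by linarith)
    (by positivity) (by positivity) (fun s => f (p + σ * s) - f p)
    ((hf.continuousOn.comp (by fun_prop) hmem).sub continuousOn_const)
    (fun s hs => by linarith [hneg s hs]) hloc
  refine ⟨C, hC, fun h hh hh1 => ?_⟩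
  have := H h hh hh1
  simp only [pow_one] at this
  rw [integral_exp_mul_Ioi (by
    have : 0 < 2 * -(σ * d1) / h := div_pos (by linarith) hh
    linarith)] at this
  rw [habs]
  have e : -Real.exp (-(2 * -(σ * d1) / h) * 0) / -(2 * -(σ * d1) / h)
    = h / (2 * -(σ * d1)) := by
    rw [mul_zero, Real.exp_zero, neg_div_neg_eq, one_div_div]
  rw [e] at this
  norm_num at this ⊢
  exact this

lemma aux_side2 (A B : ℝ) (f : ℝ → ℝ) (hf : ContDiffOn ℝ (⊤ : ℕ∞) f (Set.Icc A B))
    (p σ L : ℝ) (hp : p ∈ Set.Icc A B) (hσ : |σ| = 1) (hL : 0 < L)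
    (hmem : ∀ s ∈ Set.Icc 0 L, p + σ * s ∈ Set.Icc A B)
    (hneg : ∀ s ∈ Set.Ioc 0 L, f (p + σ * s) < f p)
    (hd : derivWithin f (Set.Icc A B) p = 0)
    (ha : derivWithin (derivWithin f (Set.Icc A B)) (Set.Icc A B) p < 0) :
    ∃ C > 0, ∀ h : ℝ, 0 < h → h < 1 →
      |(∫ s in (0:ℝ)..L, Real.exp (2 * (f (p + σ * s) - f p) / h))
        - √(Real.pi / (|derivWithin (derivWithin f (Set.Icc A B)) (Set.Icc A B) p| / h)) / 2|
          ≤ C * h := by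
  obtain ⟨K, hK, ε, hε, hT⟩ := aux_taylor A B f hf p hp
  rw [hd] at hT
  set d2 := derivWithin (derivWithin f (Set.Icc A B)) (Set.Icc A B) p with hd2
  have hσ2 : σ ^ 2 = 1 := by rw [← sq_abs, hσ]; norm_num
  have hloc : ∀ s ∈ Set.Icc 0 L, s < ε →
      |f (p + σ * s) - f p + -d2 / 2 * s ^ 2| ≤ K * s ^ (2 + 1) := by
    intro s hs hse
    have h0 := hs.1
    have h1 := hT _ (hmem s hs) (by
      rw [add_sub_cancel_left, abs_mul, hσ, one_mul, abs_of_nonneg h0]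
      exact hse)
    rw [add_sub_cancel_left, abs_mul, hσ, one_mul, abs_of_nonneg h0, mul_pow, hσ2, one_mul] at h1
    convert h1 using 2
    ring
  obtain ⟨C, hC, H⟩ := aux_laplace 2 two_pos L (-d2 / 2) K ε hL (by linarith)
    (by positivity) (by positivity) (fun s => f (p + σ * s) - f p)
    ((hf.continuousOn.comp (by fun_prop) hmem).sub continuousOn_const)
    (fun s hs => by linarith [hneg s hs]) hloc
  refine ⟨C, hC, fun h hh hh1 => ?_⟩
  have := H h hh hh1
  rw [integral_gaussian_Ioi] at this
  rw [abs_of_neg ha]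
  have e : 2 * (-d2 / 2) / h = -d2 / h := by ring
  rw [e] at this
  norm_num at this ⊢
  exact this

lemma aux_lt (A B : ℝ) (f : ℝ → ℝ) (hf : ContDiffOn ℝ (⊤ : ℕ∞) f (Set.Icc A B))
    (u v y : ℝ) (hu : A ≤ u) (hv : v ≤ B)
    (hc : ∀ t ∈ Set.Ioo u v, derivWithin f (Set.Icc A B) t = 0 → t = y)
    (huv : f u = f v) (hy : f y < f u) :
    ∀ t ∈ Set.Ioo u v, f t < f u := by
  intro t ht
  by_contra hcon
  push Not at hcon
  have hlt : u < v := ht.1.trans ht.2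
  have hsub : Set.Icc u v ⊆ Set.Icc A B := Set.Icc_subset_Icc hu hv
  obtain ⟨q, hq, hqm⟩ := isCompact_Icc.exists_isMaxOn (Set.nonempty_Icc.2 hlt.le)
    (hf.continuousOn.mono hsub)
  have key : ∃ w ∈ Set.Ioo u v, IsMaxOn f (Set.Icc u v) w ∧ f u ≤ f w := by
    by_cases hqi : q ∈ Set.Ioo u v
    · exact ⟨q, hqi, hqm, hqm ⟨le_refl u, hlt.le⟩⟩
    · have hqe : f q = f u := by
        rcases eq_or_lt_of_le hq.1 with h | h
        · rw [h]
        · rcases eq_or_lt_of_le hq.2 with h' | h'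
          · rw [h', huv]
          · exact absurd ⟨h, h'⟩ hqi
      refine ⟨t, ht, ?_, hcon⟩
      intro r hr
      have : f r ≤ f q := hqm hr
      show f r ≤ f t
      linarith
  obtain ⟨w, hw, hwm, hwu⟩ := key
  have hloc : IsLocalMax f w := hwm.isLocalMax (Icc_mem_nhds hw.1 hw.2)
  have hd := hloc.deriv_eq_zero
  have hdw : derivWithin f (Set.Icc A B) w = 0 := by
    rw [derivWithin_of_mem_nhds (Icc_mem_nhds (by linarith [hw.1]) (by linarith [hw.2])), hd]
  have := hc w hw hdw
  rw [this] at hwu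
  linarith

lemma aux_ratio (a b C1 C2 : ℝ) (ha : 0 < a) (hb : 0 < b) (hC1 : 0 < C1) (hC2 : 0 < C2)
    (N D : ℝ → ℝ)
    (hN : ∀ h : ℝ, 0 < h → h < 1 → |N h - h / (2 * a)| ≤ C1 * h ^ 2)
    (hD : ∀ h : ℝ, 0 < h → h < 1 → |D h - √(Real.pi / (b / h))| ≤ C2 * h) :
    ∃ C > 0, ∃ h₀ > 0, ∀ h : ℝ, 0 < h → h < h₀ →
      |N h / D h - √b / (2 * a * √Real.pi) * √h| ≤ C * h := by
  set d := √Real.pi / √b with hd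
  have hπ : 0 < √Real.pi := Real.sqrt_pos.2 Real.pi_pos
  have hb' : 0 < √b := Real.sqrt_pos.2 hb
  have hd0 : 0 < d := by positivity
  set κ := √b / (2 * a * √Real.pi) with hκ
  have hκ0 : 0 < κ := by positivity
  have hκd : κ * d = 1 / (2 * a) := by rw [hκ, hd]; field_simp
  refine ⟨2 * (C1 + κ * C2) / d, by positivity, min 1 ((d / (2 * C2)) ^ 2), by positivity, ?_⟩
  intro h hh hh0
  have hh1 : h < 1 := hh0.trans_le (min_le_left _ _)
  have hN' := hN h hh hh1
  have hD' := hD h hh hh1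
  have hr : 0 < √h := Real.sqrt_pos.2 hh
  have e : √(Real.pi / (b / h)) = d * √h := by
    rw [hd, div_div_eq_mul_div, Real.sqrt_div (by positivity), Real.sqrt_mul Real.pi_pos.le]
    ring
  rw [e] at hD'
  have hrd : √h < d / (2 * C2) := by
    rw [Real.sqrt_lt' (by positivity)]
    exact hh0.trans_le (min_le_right _ _)
  rw [lt_div_iff₀ (by positivity)] at hrd
  have hsq : √h ^ 2 = h := Real.sq_sqrt hh.le
  set r := √h with hrdef
  have hr1 : r < 1 := by nlinarith
  rw [← hsq] at hN' hD' ⊢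
  have hDl : d / 2 * r ≤ D (r ^ 2) := by
    have := (abs_le.1 hD').1
    nlinarith
  have hDpos : 0 < D (r ^ 2) := lt_of_lt_of_le (by positivity) hDl
  have e2 : N (r ^ 2) / D (r ^ 2) - κ * r = (N (r ^ 2) - κ * r * D (r ^ 2)) / D (r ^ 2) := by
    field_simp
  rw [e2, abs_div, abs_of_pos hDpos, div_le_iff₀ hDpos]
  have e3 : N (r ^ 2) - κ * r * D (r ^ 2) = (N (r ^ 2) - r ^ 2 / (2 * a))
      - κ * r * (D (r ^ 2) - d * r) := by
    have : r ^ 2 / (2 * a) = κ * d * r ^ 2 := by rw [hκd]; ring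
    rw [this]; ring
  rw [e3]
  have h5 : |κ * r * (D (r ^ 2) - d * r)| ≤ κ * r * (C2 * r ^ 2) := by
    rw [abs_mul, abs_of_pos (by positivity : 0 < κ * r)]
    gcongr
  have h6 : (r ^ 2) ^ 2 ≤ r ^ 3 := by
    have : 0 < r ^ 3 := by positivity
    nlinarith
  calc _ ≤ |N (r ^ 2) - r ^ 2 / (2 * a)| + |κ * r * (D (r ^ 2) - d * r)| := abs_sub _ _
    _ ≤ C1 * (r ^ 2) ^ 2 + κ * r * (C2 * r ^ 2) := add_le_add hN' h5
    _ ≤ (C1 + κ * C2) * r ^ 3 := by nlinarith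
    _ = 2 * (C1 + κ * C2) / d * r ^ 2 * (d / 2 * r) := by field_simp
    _ ≤ _ := by gcongr

theorem stmt16 (z₁ z₂ x₁ z x₂ : ℝ) (hz : z₁ < z₂)
    (f : ℝ → ℝ) (hf : ContDiffOn ℝ (⊤ : ℕ∞) f (Set.Icc z₁ z₂))
    (h₁ : z₁ < x₁) (h₂ : x₁ < z) (h₃ : z < x₂) (h₄ : x₂ < z₂)
    (hcrit : {t ∈ Set.Icc z₁ z₂ | derivWithin f (Set.Icc z₁ z₂) t = 0} = {x₁, z, x₂})
    (hv1 : f x₁ < f x₂) (hv2 : f x₂ < f z) (hv3 : f z = f z₁) (hv4 : f z₁ = f z₂)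
    (hf'' : derivWithin (derivWithin f (Set.Icc z₁ z₂)) (Set.Icc z₁ z₂) z < 0)
    (hf'z₁ : derivWithin f (Set.Icc z₁ z₂) z₁ < 0)
    (hf'z₂ : 0 < derivWithin f (Set.Icc z₁ z₂) z₂) :
    ∀ x ∈ Set.Ioo z₁ z, ∃ C > 0, ∃ h₀ > 0, ∀ h : ℝ, 0 < h → h < h₀ →
      |(∫ t in z₁..x, Real.exp (2 * f t / h)) /
          (∫ t in z₁..z₂, Real.exp (2 * f t / h)) -
        Real.sqrt |derivWithin (derivWithin f (Set.Icc z₁ z₂)) (Set.Icc z₁ z₂) z| /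
          (2 * |derivWithin f (Set.Icc z₁ z₂) z₁| * Real.sqrt Real.pi) * Real.sqrt h| ≤
        C * h := by
  intro x hx
  have hcr : ∀ t ∈ Set.Icc z₁ z₂, derivWithin f (Set.Icc z₁ z₂) t = 0 →
      t = x₁ ∨ t = z ∨ t = x₂ := by
    intro t ht h0
    have : t ∈ ({x₁, z, x₂} : Set ℝ) := hcrit ▸ ⟨ht, h0⟩
    simpa using this
  have hdz : derivWithin f (Set.Icc z₁ z₂) z = 0 := by
    have : z ∈ {t ∈ Set.Icc z₁ z₂ | derivWithin f (Set.Icc z₁ z₂) t = 0} := by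
      rw [hcrit]; simp
    exact this.2
  have hltL : ∀ t ∈ Set.Ioo z₁ z, f t < f z := by
    rw [hv3]
    refine aux_lt z₁ z₂ f hf z₁ z x₁ le_rfl (by linarith) ?_ hv3.symm (by linarith)
    intro t ht h0
    rcases hcr t ⟨ht.1.le, by linarith [ht.2]⟩ h0 with h | h | h
    · exact h
    · linarith [ht.2]
    · linarith [ht.2]
  have hltR : ∀ t ∈ Set.Ioo z z₂, f t < f z := by
    refine aux_lt z₁ z₂ f hf z z₂ x₂ (by linarith) le_rfl ?_ (by linarith) (by linarith)
    intro t ht h0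
    rcases hcr t ⟨by linarith [ht.1], ht.2.le⟩ h0 with h | h | h
    · linarith [ht.1]
    · linarith [ht.1]
    · exact h
  have hfz2 : f z₂ = f z := by linarith
  -- substitution facts
  have subR : ∀ (G : ℝ → ℝ) (p q : ℝ), ∫ s in (0:ℝ)..(q - p), G (p + 1 * s) = ∫ t in p..q, G t := by
    intro G p q
    have := intervalIntegral.integral_comp_add_left G p (a := 0) (b := q - p)
    simpa using this
  have subL : ∀ (G : ℝ → ℝ) (p q : ℝ),
      ∫ s in (0:ℝ)..(p - q), G (p + (-1) * s) = ∫ t in q..p, G t := by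
    intro G p q
    have := intervalIntegral.integral_comp_sub_left G p (a := 0) (b := p - q)
    simpa [sub_eq_add_neg] using this
  -- numerators
  have num : ∀ y ∈ Set.Ioo z₁ z, ∃ C > 0, ∀ h : ℝ, 0 < h → h < 1 →
      |(∫ t in z₁..y, Real.exp (2 * (f t - f z) / h))
        - h / (2 * |derivWithin f (Set.Icc z₁ z₂) z₁|)| ≤ C * h ^ 2 := by
    intro y hy
    obtain ⟨C, hC, H⟩ := aux_side1 z₁ z₂ f hf z₁ 1 (y - z₁) ⟨le_rfl, hz.le⟩ (by norm_num)
      (by linarith [hy.1])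
      (fun s hs => ⟨by linarith [hs.1], by linarith [hs.2, hy.2]⟩)
      (fun s hs => by
        have := hltL (z₁ + 1 * s) ⟨by linarith [hs.1], by linarith [hs.2, hy.2]⟩
        linarith)
      (by linarith)
    refine ⟨C, hC, fun h hh hh1 => ?_⟩
    have := H h hh hh1
    rw [← hv3, subR (fun t => Real.exp (2 * (f t - f z) / h))] at this
    exact this
  obtain ⟨C1, hC1, H1⟩ := num x hx
  obtain ⟨C2, hC2, H2⟩ := num x₁ ⟨h₁, h₂⟩
  obtain ⟨C3, hC3, H3⟩ := aux_side1 z₁ z₂ f hf z₂ (-1) (z₂ - x₂) ⟨hz.le, le_rfl⟩ (by norm_num)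
      (by linarith)
      (fun s hs => ⟨by linarith [hs.2], by linarith [hs.1]⟩)
      (fun s hs => by
        have := hltR (z₂ + (-1) * s) ⟨by linarith [hs.2], by linarith [hs.1]⟩
        linarith)
      (by linarith)
  obtain ⟨C4, hC4, H4⟩ := aux_side2 z₁ z₂ f hf z (-1) (z - x₁) ⟨by linarith, by linarith⟩
      (by norm_num) (by linarith)
      (fun s hs => ⟨by linarith [hs.2], by linarith [hs.1]⟩)
      (fun s hs => hltL (z + (-1) * s) ⟨by linarith [hs.2], by linarith [hs.1]⟩)
      hdz hf''
  obtain ⟨C5, hC5, H5⟩ := aux_side2 z₁ z₂ f hf z 1 (x₂ - z) ⟨by linarith, by linarith⟩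
      (by norm_num) (by linarith)
      (fun s hs => ⟨by linarith [hs.1], by linarith [hs.2]⟩)
      (fun s hs => hltR (z + 1 * s) ⟨by linarith [hs.1], by linarith [hs.2]⟩)
      hdz hf''
  set a := |derivWithin f (Set.Icc z₁ z₂) z₁| with ha
  set a' := |derivWithin f (Set.Icc z₁ z₂) z₂| with ha'
  set b := |derivWithin (derivWithin f (Set.Icc z₁ z₂)) (Set.Icc z₁ z₂) z| with hb
  have ha0 : 0 < a := abs_pos.2 hf'z₁.ne
  have ha'0 : 0 < a' := abs_pos.2 hf'z₂.ne'
  have hb0 : 0 < b := abs_pos.2 hf''.ne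
  obtain ⟨C, hC, h₀, hh₀, H⟩ := aux_ratio a b C1 (C2 + C3 + C4 + C5 + 1 / (2 * a) + 1 / (2 * a'))
    ha0 hb0 hC1 (by positivity)
    (fun h => ∫ t in z₁..x, Real.exp (2 * (f t - f z) / h))
    (fun h => ∫ t in z₁..z₂, Real.exp (2 * (f t - f z) / h)) H1 (by
      intro h hh hh1
      have hcont : ContinuousOn (fun t => Real.exp (2 * (f t - f z) / h)) (Set.Icc z₁ z₂) := by
        have := hf.continuousOn
        fun_prop
      have hint : ∀ u v : ℝ, z₁ ≤ u → u ≤ v → v ≤ z₂ →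
          IntervalIntegrable (fun t => Real.exp (2 * (f t - f z) / h)) volume u v := by
        intro u v hu huv hv
        refine (hcont.mono ?_).intervalIntegrable
        rw [Set.uIcc_of_le huv]
        exact Set.Icc_subset_Icc hu hv
      have e2 := H2 h hh hh1
      have e3 := H3 h hh hh1
      have e4 := H4 h hh hh1
      have e5 := H5 h hh hh1
      rw [hfz2, subL (fun t => Real.exp (2 * (f t - f z) / h))] at e3
      rw [subL (fun t => Real.exp (2 * (f t - f z) / h))] at e4
      rw [subR (fun t => Real.exp (2 * (f t - f z) / h))] at e5
      have i1 := intervalIntegral.integral_add_adjacent_intervals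
        (hint z₁ x₁ le_rfl h₁.le (by linarith)) (hint x₁ z h₁.le h₂.le (by linarith))
      have i2 := intervalIntegral.integral_add_adjacent_intervals
        (hint z₁ z le_rfl (by linarith) (by linarith)) (hint z x₂ (by linarith) h₃.le (by linarith))
      have i3 := intervalIntegral.integral_add_adjacent_intervals
        (hint z₁ x₂ le_rfl (by linarith) (by linarith)) (hint x₂ z₂ (by linarith) h₄.le le_rfl)
      have hsq : h ^ 2 ≤ h := by nlinarith
      have q2 : C2 * h ^ 2 ≤ C2 * h := by gcongr
      have q3 : C3 * h ^ 2 ≤ C3 * h := by gcongr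
      have q4 : h / (2 * a) = 1 / (2 * a) * h := by ring
      have q5 : h / (2 * a') = 1 / (2 * a') * h := by ring
      have q6 : 0 < 1 / (2 * a) * h := by positivity
      have q7 : 0 < 1 / (2 * a') * h := by positivity
      rw [q4] at e2
      rw [q5] at e3
      rw [abs_le] at e2 e3 e4 e5 ⊢
      constructor <;> linarith [e2.1, e2.2, e3.1, e3.2, e4.1, e4.2, e5.1, e5.2])
  refine ⟨C, hC, h₀, hh₀, fun h hh hh1 => ?_⟩
  have hrew : ∀ u v : ℝ, ∫ t in u..v, Real.exp (2 * f t / h) =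
      Real.exp (2 * f z / h) * ∫ t in u..v, Real.exp (2 * (f t - f z) / h) := by
    intro u v
    rw [← intervalIntegral.integral_const_mul]
    congr 1
    ext t
    rw [← Real.exp_add]
    congr 1
    ring
  rw [hrew, hrew, mul_div_mul_left _ _ (Real.exp_pos _).ne']
  exact H h hh hh1
end
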